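/- arXiv:2007.07384 — 6 statements merged into one kernel-verified Lean document; each statement's English description precedes it below -/
import Mathlib

section
/- Let (U, d) be a finite metric space, k ≥ 1 an integer, ψ > 0 a real number, and let c_1, …, c_k ∈ U and R > 0 be an initial k-center solution of radius R (every point of U is within distance R of some c_i). Then there exists an admissible randomized clustering μ such that: (i) for every pair of points u, v ∈ U, the μ-probability that u and v are separated is at most d(u, v) / (ψ R); and (ii) the μ-probability that the radius of the clustering exceeds 2 R (1 + log k) is at most k^{1 − 1/ψ}. -/
/-!
The clustering comes from exponentially shifted distances. Give center `c i` an independent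
exponential shift `x i` of rate `β = 1 / (ψ R)`, let every point `u` join a cluster `i` that
maximises `x i - d(u, c i)`, and designate an arbitrary member of each nonempty cluster as its
center, so that admissibility is automatic.

*Separation.* Let `a i` be the average of `d(u, c i)` and `d(v, c i)`. If the best index for
`x i - a i` beats all others by more than `d(u, v)`, then it is the strict best index for both `u`
and `v`, so they are not separated. A lead of at least `D` has probability at least `exp (-β D)`
(`measureReal_no_lead_le`): raising the coordinate of the winner by `D` sends the space of shifts
into the event of a lead of `D`, injectively, and raising one coordinate by `D` shrinks the measure
of a set by a factor of at most `exp (-β D)` (`le_shifts_preimage_sub`). Hence the probability of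
separation is at most `1 - exp (-β D) ≤ β D` for every `D > d(u, v)`.

*Radius.* Almost surely all shifts are nonnegative, and by a union bound all are at most `R log k`
except with probability `k exp (-β R log k) = k ^ (1 - 1 / ψ)`. Outside these exceptions every
point is within `R + R log k` of the `c i` of its cluster, since some `c j` is within `R` of it; so
each cluster has diameter at most `2 R (1 + log k)`, and any member may serve as its center.
-/

open MeasureTheory
open ProbabilityTheory Set
open scoped ENNReal

namespace PairwiseFair

/-! ### Exponential shifts -/

/-- The joint law of `k` independent exponential shifts of rate `β`. -/
noncomputable def shifts (k : ℕ) (β : ℝ) : Measure (Fin k → ℝ) :=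
  Measure.pi fun _ => expMeasure β

lemma isProbabilityMeasure_shifts (k : ℕ) {β : ℝ} (hβ : 0 < β) :
    IsProbabilityMeasure (shifts k β) := by
  have := isProbabilityMeasure_expMeasure hβ
  unfold shifts
  infer_instance

/-- Memorylessness of the exponential law, as a comparison of measures. -/
lemma smul_expMeasure_le_map {β D : ℝ} (hD : 0 ≤ D) :
    ENNReal.ofReal (Real.exp (-(β * D))) • expMeasure β
      ≤ (expMeasure β).map (fun x => x - D) := by
  refine Measure.le_iff.2 fun s hs => ?_
  have hpdf : Measurable (exponentialPDF β) := (measurable_exponentialPDFReal β).ennreal_ofReal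
  have hdens : expMeasure β = volume.withDensity (exponentialPDF β) := rfl
  have hsub : Measurable fun x : ℝ => x - D := by fun_prop
  rw [Measure.map_apply hsub hs, Measure.smul_apply, smul_eq_mul, hdens,
    withDensity_apply _ hs, withDensity_apply _ (hsub hs),
    ← lintegral_const_mul _ hpdf, ← lintegral_indicator hs, ← lintegral_indicator (hsub hs),
    ← lintegral_add_right_eq_self (μ := volume)
      (((fun x : ℝ => x - D) ⁻¹' s).indicator (exponentialPDF β)) D]
  refine lintegral_mono fun x => ?_
  by_cases hx : x ∈ s
  · have hx' : x + D ∈ (fun x : ℝ => x - D) ⁻¹' s := by simpa using hx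
    simp only [indicator_of_mem hx, indicator_of_mem hx']
    rcases lt_or_ge x 0 with h0 | h0
    · simp [exponentialPDF_of_neg h0]
    · rw [exponentialPDF_of_nonneg h0, exponentialPDF_of_nonneg (by linarith),
        ← ENNReal.ofReal_mul (Real.exp_pos _).le]
      apply le_of_eq
      congr 1
      rw [show -(β * (x + D)) = -(β * D) + -(β * x) by ring, Real.exp_add]
      ring
  · simp [indicator_of_notMem hx]

/-- Raising the `i`-th shift by `D ≥ 0` shrinks the probability of an event by a factor of at
most `exp (-β D)`. -/
lemma le_shifts_preimage_sub {k : ℕ} {β D : ℝ} (hβ : 0 < β) (hD : 0 ≤ D) (i : Fin k)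
    {s : Set (Fin k → ℝ)} (hs : MeasurableSet s) :
    ENNReal.ofReal (Real.exp (-(β * D))) * shifts k β s
      ≤ shifts k β ((fun x j => x j - if j = i then D else 0) ⁻¹' s) := by
  have := isProbabilityMeasure_expMeasure hβ
  set t : Fin k → ℝ → ℝ := fun j x => x - if j = i then D else 0 with ht
  have htm : ∀ j, Measurable (t j) := fun j => by fun_prop
  have hmap : (shifts k β).map (fun x j => t j (x j))
      = Measure.pi fun j => (expMeasure β).map (t j) :=
    have : ∀ j, IsProbabilityMeasure ((expMeasure β).map (t j)) :=
      fun j => Measure.isProbabilityMeasure_map (htm j).aemeasurable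
    Measure.pi_map_pi fun j => (htm j).aemeasurable
  have hTm : Measurable fun (x : Fin k → ℝ) j => t j (x j) := by fun_prop
  change _ ≤ shifts k β ((fun x j => t j (x j)) ⁻¹' s)
  rw [← Measure.map_apply hTm hs, hmap, Measure.pi, toMeasure_apply _ _ hs]
  -- A measure is dominated by a product outer measure as soon as it is so on boxes.
  have hbox : (ENNReal.ofReal (Real.exp (-(β * D))) • shifts k β).toOuterMeasure
      ≤ OuterMeasure.pi fun j => ((expMeasure β).map (t j)).toOuterMeasure := by
    refine OuterMeasure.le_pi.2 fun b _ => ?_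
    change ENNReal.ofReal (Real.exp (-(β * D))) * shifts k β (pi univ b)
      ≤ ∏ j, (expMeasure β).map (t j) (b j)
    rw [shifts, Measure.pi_pi, ← Finset.mul_prod_erase _ _ (Finset.mem_univ i),
      ← Finset.mul_prod_erase _ _ (Finset.mem_univ i), ← mul_assoc]
    refine mul_le_mul' ?_ (Finset.prod_le_prod' fun j hj => ?_)
    · have := smul_expMeasure_le_map (β := β) hD (b i)
      simpa [ht] using this
    · simp [ht, Finset.ne_of_mem_erase hj]
  exact hbox s

lemma ae_shifts_nonneg (k : ℕ) {β : ℝ} (hβ : 0 < β) :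
    ∀ᵐ x ∂shifts k β, ∀ i, 0 ≤ x i := by
  have := isProbabilityMeasure_expMeasure hβ
  refine ae_all_iff.2 fun i => ?_
  have h : expMeasure β (Iio 0) = 0 := by
    change volume.withDensity (exponentialPDF β) (Iio 0) = 0
    rw [withDensity_apply _ measurableSet_Iio, lintegral_exponentialPDF_of_nonpos le_rfl]
  have h2 : shifts k β (Function.eval i ⁻¹' Iio 0) = 0 := Measure.pi_eval_preimage_null _ h
  rw [ae_iff]
  refine measure_mono_null (fun x hx => ?_) h2
  simpa using hx

lemma shifts_tail (k : ℕ) {β t : ℝ} (hβ : 0 < β) (ht : 0 ≤ t) (i : Fin k) :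
    shifts k β {x | t < x i} = ENNReal.ofReal (Real.exp (-(β * t))) := by
  have := isProbabilityMeasure_expMeasure hβ
  have h1 : shifts k β {x | t < x i} = expMeasure β (Ioi t) :=
    (measurePreserving_eval (fun _ : Fin k => expMeasure β) i).measure_preimage
      measurableSet_Ioi.nullMeasurableSet
  have h2 := cdf_expMeasure_eq hβ t
  rw [cdf_eq_real, if_pos ht] at h2
  rw [h1, ← compl_Iic, ← ofReal_measureReal, probReal_compl_eq_one_sub measurableSet_Iic, h2]
  congr 1
  ring

lemma shifts_exceeds_le (k : ℕ) {β t : ℝ} (hβ : 0 < β) (ht : 0 ≤ t) :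
    shifts k β {x | ∃ i, t < x i} ≤ ENNReal.ofReal (k * Real.exp (-(β * t))) := by
  rw [ofPred_exists]
  refine (measure_iUnion_fintype_le _ _).trans ?_
  simp only [shifts_tail k hβ ht]
  simp [ENNReal.ofReal_mul]

/-! ### The best index and its lead -/

/-- An index maximising `x i - a i`, chosen as a function of the comparisons among these numbers
only; this makes it measurable in `x`. -/
noncomputable def best {k : ℕ} [Nonempty (Fin k)] (a x : Fin k → ℝ) : Fin k :=
  Classical.epsilon fun i => ∀ j, x j - a j ≤ x i - a i

lemma best_spec {k : ℕ} [Nonempty (Fin k)] (a x : Fin k → ℝ) (j : Fin k) :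
    x j - a j ≤ x (best a x) - a (best a x) := by
  have h : ∃ i, ∀ j, x j - a j ≤ x i - a i := Finite.exists_max fun i => x i - a i
  exact Classical.epsilon_spec h j

lemma best_eq {k : ℕ} [Nonempty (Fin k)] {a x : Fin k → ℝ} {i : Fin k}
    (h : ∀ j, j ≠ i → x j - a j < x i - a i) : best a x = i := by
  by_contra hne
  exact absurd (best_spec a x i) (not_le.2 (h _ hne))

lemma measurable_best {k : ℕ} [Nonempty (Fin k)] (a : Fin k → ℝ) : Measurable (best a) := by
  have h1 : Measurable fun (x : Fin k → ℝ) (i j : Fin k) => (x j - a j ≤ x i - a i) := by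
    refine measurable_pi_lambda _ fun i => measurable_pi_lambda _ fun j => ?_
    exact measurableSet_setOfPred.1 (measurableSet_le (by fun_prop) (by fun_prop))
  have h2 : Measurable fun r : Fin k → Fin k → Prop => Classical.epsilon fun i => ∀ j, r i j :=
    measurable_of_countable _
  exact h2.comp h1

/-- Index `i` beats every other index by at least `D`. -/
def Leads {k : ℕ} (a : Fin k → ℝ) (D : ℝ) (i : Fin k) (x : Fin k → ℝ) : Prop :=
  ∀ j, j ≠ i → x j - a j + D ≤ x i - a i

/-- With probability at least `exp (-β D)`, some index leads by at least `D`. -/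
lemma measureReal_no_lead_le {k : ℕ} [Nonempty (Fin k)] {β D : ℝ} (hβ : 0 < β) (hD : 0 < D)
    (a : Fin k → ℝ) :
    (shifts k β).real {x | ¬ ∃ i, Leads a D i x} ≤ β * D := by
  have hP := isProbabilityMeasure_shifts k hβ
  set P := shifts k β
  set e := ENNReal.ofReal (Real.exp (-(β * D))) with he
  have hFm : ∀ i, MeasurableSet (best a ⁻¹' {i}) := fun i => measurable_best a (.singleton i)
  let S : Fin k → (Fin k → ℝ) → (Fin k → ℝ) := fun i x j => x j - if j = i then D else 0
  have hSm : ∀ i, Measurable (S i) := fun i => by fun_prop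
  let G : Fin k → Set (Fin k → ℝ) := fun i => S i ⁻¹' (best a ⁻¹' {i})
  have hGm : ∀ i, MeasurableSet (G i) := fun i => hSm i (hFm i)
  have hlead : ∀ i, ∀ x ∈ G i, Leads a D i x := by
    intro i x hx j hj
    have hx' : best a (S i x) = i := hx
    have := best_spec a (S i x) j
    rw [hx'] at this
    simp only [S, if_neg hj, if_true] at this
    linarith
  have hdisj : Pairwise (Function.onFun Disjoint G) := by
    intro i j hij
    refine Set.disjoint_left.2 fun x hi hj => ?_
    have h1 := hlead i x hi j hij.symm
    have h2 := hlead j x hj i hij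
    linarith
  have hsum : ∑ i, P (best a ⁻¹' {i}) = 1 := by
    have hcover : ⋃ i, best a ⁻¹' {i} = univ := by
      ext x
      simp
    rw [← measure_univ (μ := P), ← hcover, measure_iUnion _ hFm, tsum_fintype]
    intro i j hij
    exact Disjoint.preimage _ (by simpa using hij)
  have hunion : e ≤ P (⋃ i, G i) := by
    rw [measure_iUnion hdisj hGm, tsum_fintype]
    calc e = ∑ i, e * P (best a ⁻¹' {i}) := by rw [← Finset.mul_sum, hsum, mul_one]
      _ ≤ _ := Finset.sum_le_sum fun i _ => le_shifts_preimage_sub hβ hD.le i (hFm i)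
  have hunion' : Real.exp (-(β * D)) ≤ P.real (⋃ i, G i) :=
    (ENNReal.ofReal_le_iff_le_toReal (measure_ne_top _ _)).1 hunion
  calc P.real {x | ¬ ∃ i, Leads a D i x} ≤ P.real (⋃ i, G i)ᶜ := by
        refine measureReal_mono fun x hx hxG => hx ?_
        obtain ⟨i, hi⟩ := mem_iUnion.1 hxG
        exact ⟨i, hlead i x hi⟩
    _ = 1 - P.real (⋃ i, G i) := probReal_compl_eq_one_sub (.iUnion hGm)
    _ ≤ β * D := by linarith [Real.add_one_le_exp (-(β * D))]

/-! ### The clustering -/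

section Clustering

variable {U : Type*} [MetricSpace U] {k : ℕ} [Nonempty (Fin k)]

/-- The clustering determined by the shifts `x`: each point joins its best index, and each
nonempty cluster gets one of its members as center. -/
noncomputable def clustering [Nonempty U] (c : Fin k → U) (x : Fin k → ℝ) :
    (U → Fin k) × (Fin k → U) :=
  (fun u => best (fun i => dist u (c i)) x,
    fun i => Classical.epsilon fun u => best (fun i => dist u (c i)) x = i)

lemma clustering_admissible [Nonempty U] (c : Fin k → U) (x : Fin k → ℝ) (i : Fin k)
    (h : ∃ u, (clustering c x).1 u = i) :
    (clustering c x).1 ((clustering c x).2 i) = i :=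
  Classical.epsilon_spec h

lemma measurable_clustering [Finite U] [Nonempty U] (c : Fin k → U) :
    @Measurable _ _ _ ⊤ (clustering c) := by
  have h1 : Measurable fun (x : Fin k → ℝ) (u : U) => best (fun i => dist u (c i)) x :=
    measurable_pi_lambda _ fun u => measurable_best _
  have h2 : @Measurable (U → Fin k) ((U → Fin k) × (Fin k → U)) _ ⊤
      fun f => (f, fun i => Classical.epsilon fun u => f u = i) := by
    let _ : MeasurableSpace ((U → Fin k) × (Fin k → U)) := ⊤
    exact measurable_of_countable _
  exact h2.comp h1

/-- An index leading by more than `dist u v` for the distances averaged over `u` and `v` is the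
index that `u` joins. -/
lemma best_dist_eq {c : Fin k → U} {u v : U} {D : ℝ} (hD : dist u v < D) {i : Fin k}
    {x : Fin k → ℝ} (h : Leads (fun j => (dist u (c j) + dist v (c j)) / 2) D i x) :
    best (fun j => dist u (c j)) x = i := by
  refine best_eq fun j hj => ?_
  have h1 := h j hj
  have h2 := dist_triangle u v (c i)
  have h3 := dist_triangle_left v (c j) u
  simp only at h1
  linarith

lemma shifts_separated_le (c : Fin k → U) {β : ℝ} (hβ : 0 < β) (u v : U) :
    shifts k β {x | best (fun j => dist u (c j)) x ≠ best (fun j => dist v (c j)) x}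
      ≤ ENNReal.ofReal (β * dist u v) := by
  have hP := isProbabilityMeasure_shifts k hβ
  rw [← ofReal_measureReal]
  refine ENNReal.ofReal_le_ofReal ?_
  -- Ties are avoided by asking for a lead `D` strictly larger than `dist u v`.
  rw [← div_le_iff₀' hβ]
  refine le_of_forall_gt_imp_ge_of_dense fun D hD => ?_
  rw [div_le_iff₀' hβ]
  refine (measureReal_mono fun x hx => ?_).trans
    (measureReal_no_lead_le hβ (dist_nonneg.trans_lt hD)
      fun j => (dist u (c j) + dist v (c j)) / 2)
  rintro ⟨i, hi⟩
  refine hx ((best_dist_eq hD hi).trans (best_dist_eq (u := v) (v := u) (D := D) ?_ ?_).symm)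
  · rwa [dist_comm]
  · simpa only [add_comm] using hi

lemma dist_best_le {c : Fin k → U} {R t : ℝ} (hcov : ∀ u : U, ∃ i : Fin k, dist u (c i) ≤ R)
    {x : Fin k → ℝ} (h0 : ∀ i, 0 ≤ x i) (ht : ∀ i, x i ≤ t) (u : U) :
    dist u (c (best (fun j => dist u (c j)) x)) ≤ R + t := by
  obtain ⟨j, hj⟩ := hcov u
  have h1 := best_spec (fun j => dist u (c j)) x j
  have h2 := ht (best (fun j => dist u (c j)) x)
  have h3 := h0 j
  linarith

lemma dist_center_le [Nonempty U] {c : Fin k → U} {R t : ℝ}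
    (hcov : ∀ u : U, ∃ i : Fin k, dist u (c i) ≤ R)
    {x : Fin k → ℝ} (h0 : ∀ i, 0 ≤ x i) (ht : ∀ i, x i ≤ t) (u : U) :
    dist u ((clustering c x).2 ((clustering c x).1 u)) ≤ 2 * (R + t) := by
  set w := (clustering c x).2 ((clustering c x).1 u)
  have hw : (clustering c x).1 w = (clustering c x).1 u :=
    clustering_admissible c x _ ⟨u, rfl⟩
  have h1 : dist u (c ((clustering c x).1 u)) ≤ R + t := dist_best_le hcov h0 ht u
  have h2 : dist w (c ((clustering c x).1 w)) ≤ R + t := dist_best_le hcov h0 ht w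
  rw [hw] at h2
  linarith [dist_triangle_right u w (c ((clustering c x).1 u))]

end Clustering

end PairwiseFair

open PairwiseFair

/-- Given a finite metric space `U`, `k ≥ 1`, `ψ > 0`, and an
initial `k`-center solution `c : Fin k → U` of radius `R > 0`, there exists an
admissible randomized clustering `μ` (a probability measure on pairs `(f, σ)` of
an assignment `f : U → Fin k` and centers `σ : Fin k → U`, almost surely
satisfying `f (σ i) = i` for every `i` in the range of `f`) such that:
(i) every pair `u, v` is separated with probability at most `d(u,v)/(ψR)`; and
(ii) the probability that the clustering radius `max_u d(u, σ(f u))` exceeds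
`2R(1 + log k)` is at most `k^{1 − 1/ψ}`. -/
theorem pairwise_fair_clustering_exists
    {U : Type*} [MetricSpace U] [Fintype U] [Nonempty U]
    (k : ℕ) (hk : 1 ≤ k) (ψ : ℝ) (hψ : 0 < ψ)
    (c : Fin k → U) (R : ℝ) (hR : 0 < R)
    (hcov : ∀ u : U, ∃ i : Fin k, dist u (c i) ≤ R) :
    ∃ μ : @Measure ((U → Fin k) × (Fin k → U)) ⊤,
      @IsProbabilityMeasure _ ⊤ μ ∧
      (∀ᵐ p ∂μ, ∀ i : Fin k, (∃ u : U, p.1 u = i) → p.1 (p.2 i) = i) ∧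
      (∀ u v : U,
        μ {p | p.1 u ≠ p.1 v} ≤ ENNReal.ofReal (dist u v / (ψ * R))) ∧
      μ {p | ∃ u : U, 2 * R * (1 + Real.log k) < dist u (p.2 (p.1 u))}
        ≤ ENNReal.ofReal ((k : ℝ) ^ (1 - 1 / ψ)) := by
  have : Nonempty (Fin k) := ⟨⟨0, hk⟩⟩
  have hk' : (0 : ℝ) < k := by exact_mod_cast hk
  have hβ : 0 < 1 / (ψ * R) := by positivity
  have hm := measurable_clustering c
  have hP := isProbabilityMeasure_shifts k hβ
  let _ : MeasurableSpace ((U → Fin k) × (Fin k → U)) := ⊤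
  refine ⟨(shifts k (1 / (ψ * R))).map (clustering c),
    Measure.isProbabilityMeasure_map hm.aemeasurable, ?_, fun u v => ?_, ?_⟩
  · rw [ae_map_iff hm.aemeasurable trivial]
    exact .of_forall fun x => clustering_admissible c x
  · rw [Measure.map_apply hm trivial]
    have h := shifts_separated_le c hβ u v
    rwa [one_div_mul_eq_div] at h
  · rw [Measure.map_apply hm trivial]
    have hlog : 0 ≤ Real.log k := Real.log_nonneg (by exact_mod_cast hk)
    have hpow : (k : ℝ) ^ (1 - 1 / ψ) = k * Real.exp (-(1 / (ψ * R) * (R * Real.log k))) := by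
      rw [Real.rpow_sub hk', Real.rpow_one, Real.rpow_def_of_pos hk', div_eq_mul_inv,
        ← Real.exp_neg]
      congr 3
      field_simp
    rw [hpow]
    refine le_trans (measure_mono_ae ?_) (shifts_exceeds_le k hβ (mul_nonneg hR.le hlog))
    filter_upwards [ae_shifts_nonneg k hβ] with x h0 hx
    obtain ⟨u, hu⟩ := hx
    by_contra hle
    have hle' : ∀ i, x i ≤ R * Real.log k := fun i => not_lt.1 fun h => hle ⟨i, h⟩
    have := dist_center_le hcov h0 hle' u
    linarith
end

section
/- Let (U, d) be a finite metric space, k ≥ 1 an integer, ψ > 0 a real number, and let c_1, …, c_k ∈ U and R > 0 be an initial k-center solution of radius R (every point of U is within distance R of some c_i). Then there exists an admissible randomized clustering μ such that: (i) for every nonempty subset S ⊆ U with diameter D = max_{u, v ∈ S} d(u, v) and every integer t ≥ 1, the μ-probability that f takes more than t distinct values on S (i.e., S is partitioned into more than t clusters) is at most (D / (ψ R))^t; and (ii) the μ-probability that the radius of the clustering exceeds 2 R (1 + log k) is at most k^{1 − 1/ψ}. -/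
/-!
The clustering comes from exponential shifts. Draw independent `δ i ∼ Exp(β)` with
`β = 1 / (2 ψ R)` and send `u` to the index `i` maximising `δ i - dist u (c i)`, ties going to the
smaller index; the center of cluster `i` is `c i`.

*Admissibility* holds for every `δ`: if `c i` prefers some `j` to `i`, then by the triangle
inequality every point does, so cluster `i` is empty.

*Radius.* If all shifts lie in `[0, x]`, then `u` is within `R + x` of its center. A union bound with
`x = R + 2 R log k` gives failure probability at most `k exp (-β x) ≤ k ^ (1 - 1 / ψ)`.

*Separation.* Fix `v ∈ S`. Every index used on `S` has score `δ i - dist v (c i)` within `w = 2 D` of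
the best one, so it suffices to bound the probability that more than `t` scores lie within `w` of
the maximum (`shift_window`). Split according to the index `j` with exactly `t` indices ranked
above it and the set `A` of those indices: the `t` scores in `A` must all fall in a window of
length `w` above the score of `j`. Given all coordinates outside `A`, memorylessness
(`expMeasure_window`) shows that each of them does so with conditional probability at most `β w`,
so the piece costs a factor `(β w) ^ t` (`shift_piece`); the pieces being disjoint, the total is
at most `(β w) ^ t = (D / (ψ R)) ^ t`.
-/

open MeasureTheory

namespace ShiftClustering

open ProbabilityTheory Set
open scoped ENNReal

/-! ### Ranking indices by score -/

/-- Index `i` is ranked above index `j` for the scores `y`: it has a larger score, or the same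
score and a smaller index. -/
def Beats {k : ℕ} (y : Fin k → ℝ) (i j : Fin k) : Prop :=
  y j < y i ∨ (y j = y i ∧ i < j)

lemma Beats.trans {k : ℕ} {y : Fin k → ℝ} {i j l : Fin k}
    (h₁ : Beats y i j) (h₂ : Beats y j l) : Beats y i l := by
  unfold Beats at *
  grind

lemma Beats.irrefl {k : ℕ} (y : Fin k → ℝ) (i : Fin k) : ¬ Beats y i i := by
  unfold Beats
  grind

lemma Beats.total {k : ℕ} (y : Fin k → ℝ) {i j : Fin k} (h : i ≠ j) :
    Beats y i j ∨ Beats y j i := by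
  unfold Beats
  grind

open Classical in
/-- The set of indices ranked above `j`. -/
noncomputable def above {k : ℕ} (y : Fin k → ℝ) (j : Fin k) : Finset (Fin k) :=
  Finset.univ.filter fun i => Beats y i j

lemma mem_above {k : ℕ} {y : Fin k → ℝ} {i j : Fin k} : i ∈ above y j ↔ Beats y i j := by
  simp [above]

lemma above_card_lt {k : ℕ} (y : Fin k → ℝ) {i j : Fin k} (h : Beats y i j) :
    (above y i).card < (above y j).card := by
  apply Finset.card_lt_card
  rw [Finset.ssubset_iff_of_subset]
  · exact ⟨i, mem_above.2 h, fun h' => Beats.irrefl y i (mem_above.1 h')⟩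
  · intro l hl
    exact mem_above.2 ((mem_above.1 hl).trans h)

lemma above_card_injective {k : ℕ} (y : Fin k → ℝ) :
    Function.Injective fun j => (above y j).card := by
  intro i j h
  by_contra hne
  rcases Beats.total y hne with h' | h'
  · exact absurd h (above_card_lt y h').ne
  · exact absurd h (above_card_lt y h').ne'

/-- Every rank `t < k` is attained: the rank map is an injection of a `k`-element set into
`{0, …, k - 1}`. -/
lemma exists_above_card {k : ℕ} (y : Fin k → ℝ) {t : ℕ} (ht : t < k) :
    ∃ j, (above y j).card = t := by
  have hlt : ∀ j, (above y j).card < k := by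
    intro j
    have h : (above y j).card < (Finset.univ : Finset (Fin k)).card := by
      apply Finset.card_lt_card
      rw [Finset.ssubset_iff_of_subset (Finset.subset_univ _)]
      exact ⟨j, Finset.mem_univ _, fun h' => Beats.irrefl y j (mem_above.1 h')⟩
    simpa using h
  have hinj : Function.Injective fun j => (⟨(above y j).card, hlt j⟩ : Fin k) := by
    intro i j h
    exact above_card_injective y (by simpa using h)
  obtain ⟨j, hj⟩ := Finite.injective_iff_surjective.1 hinj ⟨t, ht⟩
  exact ⟨j, by simpa using hj⟩

lemma exists_best {k : ℕ} (hk : 0 < k) (y : Fin k → ℝ) : ∃ j, ∀ i, ¬ Beats y i j := by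
  obtain ⟨j, hj⟩ := exists_above_card y hk
  refine ⟨j, fun i hi => ?_⟩
  rw [Finset.card_eq_zero] at hj
  have := mem_above.2 hi
  simp [hj] at this

/-- The top-ranked index. -/
noncomputable def best {k : ℕ} (hk : 0 < k) (y : Fin k → ℝ) : Fin k :=
  (exists_best hk y).choose

lemma not_beats_best {k : ℕ} (hk : 0 < k) (y : Fin k → ℝ) (i : Fin k) :
    ¬ Beats y i (best hk y) :=
  (exists_best hk y).choose_spec i

lemma le_best {k : ℕ} (hk : 0 < k) (y : Fin k → ℝ) (i : Fin k) : y i ≤ y (best hk y) := by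
  have := not_beats_best hk y i
  unfold Beats at this
  grind

lemma best_eq_iff {k : ℕ} (hk : 0 < k) (y : Fin k → ℝ) (j : Fin k) :
    best hk y = j ↔ ∀ i, ¬ Beats y i j := by
  constructor
  · rintro rfl
    exact not_beats_best hk y
  · intro h
    by_contra hne
    exact (Beats.total y hne).elim (h _) (not_beats_best hk y j)

lemma measurableSet_beats {k : ℕ} (a : Fin k → ℝ) (i j : Fin k) :
    MeasurableSet {δ : Fin k → ℝ | Beats (fun l => δ l - a l) i j} := by
  have h : ∀ l, Measurable fun δ : Fin k → ℝ => δ l - a l :=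
    fun l => (measurable_pi_apply l).sub_const _
  exact (measurableSet_lt (h j) (h i)).union
    ((measurableSet_eq_fun (h j) (h i)).inter (MeasurableSet.const _))

/-! ### The exponential distribution -/

lemma expMeasure_nullSingleton (β : ℝ) : NullSingletonClass (expMeasure β) := by
  unfold expMeasure gammaMeasure
  infer_instance

lemma expMeasure_Ioi {β : ℝ} (hβ : 0 < β) (x : ℝ) :
    expMeasure β (Ioi x) = ENNReal.ofReal (1 - if 0 ≤ x then 1 - Real.exp (-(β * x)) else 0) := by
  have := isProbabilityMeasure_expMeasure hβ
  rw [← cdf_expMeasure_eq hβ, ← StieltjesFunction.measure_Ioi _ (tendsto_cdf_atTop _),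
    measure_cdf]

lemma expMeasure_Ioc {β : ℝ} (hβ : 0 < β) (x y : ℝ) :
    expMeasure β (Ioc x y) = ENNReal.ofReal ((if 0 ≤ y then 1 - Real.exp (-(β * y)) else 0)
      - if 0 ≤ x then 1 - Real.exp (-(β * x)) else 0) := by
  have := isProbabilityMeasure_expMeasure hβ
  rw [← cdf_expMeasure_eq hβ, ← cdf_expMeasure_eq hβ, ← StieltjesFunction.measure_Ioc,
    measure_cdf]

/-- Memorylessness: given that an exponential variable exceeds `z`, it lies below `z + w` with
probability at most `β w`. The set `J` stands for either `Ioi z` or `Ici z`. -/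
lemma expMeasure_window {β : ℝ} (hβ : 0 < β) {w : ℝ} (hw : 0 ≤ w) (z : ℝ) {J : Set ℝ}
    (h₁ : Ioi z ⊆ J) (h₂ : J ⊆ Ici z) :
    expMeasure β (J ∩ Iic (z + w)) ≤ ENNReal.ofReal (β * w) * expMeasure β J := by
  have := expMeasure_nullSingleton β
  calc expMeasure β (J ∩ Iic (z + w)) ≤ expMeasure β (Icc z (z + w)) :=
        measure_mono fun x hx => ⟨h₂ hx.1, hx.2⟩
    _ = expMeasure β (Ioc z (z + w)) := (measure_congr Ioc_ae_eq_Icc).symm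
    _ ≤ ENNReal.ofReal (β * w) * expMeasure β (Ioi z) := by
        rw [expMeasure_Ioc hβ, expMeasure_Ioi hβ, ← ENNReal.ofReal_mul (by positivity)]
        apply ENNReal.ofReal_le_ofReal
        have hw' : 1 - β * w ≤ Real.exp (-(β * w)) := by
          linarith [Real.add_one_le_exp (-(β * w))]
        by_cases hz : 0 ≤ z
        · rw [if_pos hz, if_pos (by linarith)]
          have he : Real.exp (-(β * (z + w))) = Real.exp (-(β * z)) * Real.exp (-(β * w)) := by
            rw [← Real.exp_add]; ring_nf
          rw [he]
          nlinarith [Real.exp_pos (-(β * z))]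
        · rw [if_neg hz]
          split_ifs with h
          · have : Real.exp (-(β * w)) ≤ Real.exp (-(β * (z + w))) := by
              apply Real.exp_le_exp.2
              nlinarith
            linarith
          · nlinarith
    _ ≤ _ := by gcongr

lemma expMeasure_outside {β : ℝ} (hβ : 0 < β) {x : ℝ} (hx : 0 ≤ x) :
    expMeasure β (Icc 0 x)ᶜ ≤ ENNReal.ofReal (Real.exp (-(β * x))) := by
  have := isProbabilityMeasure_expMeasure hβ
  have := expMeasure_nullSingleton β
  rw [prob_compl_eq_one_sub measurableSet_Icc, ← measure_congr (Ioc_ae_eq_Icc (a := 0) (b := x)),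
    expMeasure_Ioc hβ, if_pos hx, if_pos le_rfl, ← ENNReal.ofReal_one,
    ← ENNReal.ofReal_sub _ (by simp; positivity)]
  apply ENNReal.ofReal_le_ofReal
  simp

/-! ### The number of scores close to the maximum -/

/-- The law of the shifts: independent exponential variables of rate `β`. -/
noncomputable def shiftLaw (k : ℕ) (β : ℝ) : Measure (Fin k → ℝ) :=
  Measure.pi fun _ => expMeasure β

lemma measurableSet_above_eq {k : ℕ} (a : Fin k → ℝ) (A : Finset (Fin k)) (j : Fin k) :
    MeasurableSet {δ : Fin k → ℝ | above (fun l => δ l - a l) j = A} := by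
  have : {δ : Fin k → ℝ | above (fun l => δ l - a l) j = A}
      = ⋂ i, {δ : Fin k → ℝ | Beats (fun l => δ l - a l) i j ↔ i ∈ A} := by
    ext δ
    simp [Finset.ext_iff, mem_above]
  rw [this]
  exact MeasurableSet.iInter fun i => (measurableSet_beats a i j).iff (MeasurableSet.const _)

/-- Given that `A` is the set of indices ranked above `j`, all scores in `A` are within `w` of the
score of `j` with probability at most `(β w) ^ |A|`. With the coordinates outside `A` fixed, both
events are boxes in the coordinates of `A`, and `expMeasure_window` compares them side by side. -/
lemma shift_piece {k : ℕ} {β : ℝ} (hβ : 0 < β) (a : Fin k → ℝ) {w : ℝ} (hw : 0 ≤ w)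
    (A : Finset (Fin k)) (j : Fin k) :
    shiftLaw k β {δ | above (fun l => δ l - a l) j = A ∧ ∀ i ∈ A, δ i - a i ≤ δ j - a j + w}
      ≤ ENNReal.ofReal (β * w) ^ A.card
        * shiftLaw k β {δ | above (fun l => δ l - a l) j = A} := by
  have := isProbabilityMeasure_expMeasure hβ
  by_cases hj : j ∈ A
  · have hempty : {δ : Fin k → ℝ | above (fun l => δ l - a l) j = A ∧
        ∀ i ∈ A, δ i - a i ≤ δ j - a j + w} = ∅ := by
      ext δ
      simp only [mem_ofPred_eq, mem_empty_iff_false, iff_false, not_and]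
      rintro h
      rw [← h, mem_above] at hj
      exact absurd hj (Beats.irrefl _ _)
    rw [hempty]
    simp
  set e := MeasurableEquiv.piEquivPiSubtypeProd (fun _ : Fin k => ℝ) (· ∈ A) with he
  have hmp : MeasurePreserving e.symm
      ((Measure.pi fun _ : {i // i ∈ A} => expMeasure β).prod
        (Measure.pi fun _ : {i // i ∉ A} => expMeasure β))
      (Measure.pi fun _ : Fin k => expMeasure β) := by
    convert (measurePreserving_piEquivPiSubtypeProd (fun _ : Fin k => expMeasure β)
      (· ∈ A)).symm
  have hein : ∀ x y i (h : i ∈ A), e.symm (x, y) i = x ⟨i, h⟩ := by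
    intro x y i h
    exact dif_pos h
  have heout : ∀ x y i (h : i ∉ A), e.symm (x, y) i = y ⟨i, h⟩ := by
    intro x y i h
    exact dif_neg h
  have hG := measurableSet_above_eq a A j
  have hE : MeasurableSet {δ : Fin k → ℝ | above (fun l => δ l - a l) j = A ∧
      ∀ i ∈ A, δ i - a i ≤ δ j - a j + w} := by
    refine hG.inter ?_
    have : {δ : Fin k → ℝ | ∀ i ∈ A, δ i - a i ≤ δ j - a j + w}
        = ⋂ i ∈ A, {δ : Fin k → ℝ | δ i - a i ≤ δ j - a j + w} := by
      ext δ; simp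
    change MeasurableSet {δ : Fin k → ℝ | ∀ i ∈ A, δ i - a i ≤ δ j - a j + w}
    rw [this]
    refine Finset.measurableSet_biInter _ fun i _ => measurableSet_le ?_ ?_ <;> fun_prop
  unfold shiftLaw
  rw [← hmp.measure_preimage hE.nullMeasurableSet, ← hmp.measure_preimage hG.nullMeasurableSet,
    Measure.prod_apply_symm (e.symm.measurable hE),
    Measure.prod_apply_symm (e.symm.measurable hG),
    ← lintegral_const_mul' _ _ (by simp)]
  refine lintegral_mono fun y => ?_
  -- `z i` is the least shift that brings `i` level with `j`.
  set z : Fin k → ℝ := fun i => y ⟨j, hj⟩ - a j + a i with hz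
  set J : {i // i ∈ A} → Set ℝ := fun i => {s | z i < s ∨ (z i = s ∧ (i : Fin k) < j)} with hJ
  have hJbeats : ∀ x (i : {i // i ∈ A}),
      Beats (fun l => e.symm (x, y) l - a l) i j ↔ x i ∈ J i := by
    intro x i
    simp only [Beats, hein x y i i.2, heout x y j hj, hJ, hz, mem_ofPred_eq]
    constructor <;> rintro (h | ⟨h, h'⟩)
    · left; linarith
    · right; exact ⟨by linarith, h'⟩
    · left; linarith
    · right; exact ⟨by linarith, h'⟩
  by_cases hout : ∀ i (h : i ∉ A), ¬ (y ⟨j, hj⟩ - a j < y ⟨i, h⟩ - a i ∨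
      (y ⟨j, hj⟩ - a j = y ⟨i, h⟩ - a i ∧ i < j))
  · have hGbox : (fun x => (x, y)) ⁻¹' (e.symm ⁻¹'
        {δ : Fin k → ℝ | above (fun l => δ l - a l) j = A}) = Set.pi univ J := by
      ext x
      simp only [mem_preimage, mem_ofPred_eq, Finset.ext_iff, mem_above, mem_pi, mem_univ,
        forall_const]
      constructor
      · intro h i
        exact (hJbeats x i).1 ((h i).2 i.2)
      · intro h i
        by_cases hi : i ∈ A
        · exact iff_of_true ((hJbeats x ⟨i, hi⟩).2 (h ⟨i, hi⟩)) hi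
        · refine iff_of_false ?_ hi
          have := hout i hi
          simpa only [Beats, heout x y i hi, heout x y j hj] using this
    have hEbox : (fun x => (x, y)) ⁻¹' (e.symm ⁻¹'
        {δ : Fin k → ℝ | above (fun l => δ l - a l) j = A ∧
          ∀ i ∈ A, δ i - a i ≤ δ j - a j + w})
        ⊆ Set.pi univ fun i => J i ∩ Iic (z i + w) := by
      rintro x ⟨hx₁, hx₂⟩ i -
      have hxG : x ∈ Set.pi univ J := by
        rw [← hGbox]; exact hx₁
      refine ⟨hxG i (mem_univ _), ?_⟩
      have := hx₂ i i.2
      rw [hein x y i i.2, heout x y j hj] at this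
      simp only [mem_Iic, hz]
      linarith
    refine (measure_mono hEbox).trans ?_
    rw [hGbox, Measure.pi_pi, Measure.pi_pi]
    calc ∏ i, expMeasure β (J i ∩ Iic (z i + w))
        ≤ ∏ i : {i // i ∈ A}, ENNReal.ofReal (β * w) * expMeasure β (J i) := by
          refine Finset.prod_le_prod' fun i _ => expMeasure_window hβ hw _ ?_ ?_
          · intro s hs
            exact Or.inl hs
          · rintro s (hs | ⟨hs, -⟩)
            · exact le_of_lt hs
            · exact hs.le
      _ = _ := by
          rw [Finset.prod_mul_distrib]
          simp
  · have hEempty : (fun x => (x, y)) ⁻¹' (e.symm ⁻¹'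
        {δ : Fin k → ℝ | above (fun l => δ l - a l) j = A ∧
          ∀ i ∈ A, δ i - a i ≤ δ j - a j + w}) = ∅ := by
      ext x
      simp only [mem_empty_iff_false, iff_false]
      rintro ⟨hx, -⟩
      apply hout
      intro i hi hb
      apply hi
      rw [← hx, mem_above]
      simpa only [Beats, heout x y i hi, heout x y j hj] using hb
    rw [hEempty]
    simp

/-- More than `t` scores lie within `w` of the maximal score with probability at most
`(β w) ^ t`. -/
lemma shift_window {k : ℕ} {β : ℝ} (hβ : 0 < β) (a : Fin k → ℝ) {w : ℝ} (hw : 0 ≤ w) (t : ℕ) :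
    shiftLaw k β {δ | ∃ B : Finset (Fin k), t < B.card ∧
        ∀ i ∈ B, ∀ l, δ l - a l - w ≤ δ i - a i}
      ≤ ENNReal.ofReal (β * w) ^ t := by
  have := isProbabilityMeasure_expMeasure hβ
  have hprob : IsProbabilityMeasure (shiftLaw k β) := by unfold shiftLaw; infer_instance
  set I : Finset (Finset (Fin k) × Fin k) :=
    (Finset.univ : Finset (Finset (Fin k) × Fin k)).filter (fun q => q.1.card = t) with hI
  set G : Finset (Fin k) × Fin k → Set (Fin k → ℝ) :=
    fun q => {δ | above (fun l => δ l - a l) q.2 = q.1} with hG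
  have hsub : {δ : Fin k → ℝ | ∃ B : Finset (Fin k), t < B.card ∧
      ∀ i ∈ B, ∀ l, δ l - a l - w ≤ δ i - a i} ⊆
      ⋃ q ∈ I, {δ | above (fun l => δ l - a l) q.2 = q.1 ∧
        ∀ i ∈ q.1, δ i - a i ≤ δ q.2 - a q.2 + w} := by
    rintro δ ⟨B, hB, hBw⟩
    have htk : t < k := hB.trans_le (by simpa using Finset.card_le_univ B)
    obtain ⟨j, hj⟩ := exists_above_card (fun l => δ l - a l) htk
    simp only [mem_iUnion, exists_prop]
    refine ⟨(above (fun l => δ l - a l) j, j), by simp [hI, hj], rfl, ?_⟩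
    intro i hi
    by_contra! hlt
    -- Otherwise every index of `B` scores strictly more than `j`, so `B` has at most `t` elements.
    have hBA : B ⊆ above (fun l => δ l - a l) j := by
      intro l hl
      rw [mem_above]
      left
      have := hBw l hl i
      dsimp only at hlt ⊢
      linarith
    have := Finset.card_le_card hBA
    omega
  have hdisj : (I : Set (Finset (Fin k) × Fin k)).PairwiseDisjoint G := by
    rintro ⟨A, j⟩ hA ⟨A', j'⟩ hA' hne
    rw [Function.onFun, Set.disjoint_left]
    intro δ h h'
    simp only [hG, mem_ofPred_eq] at h h'
    simp only [hI, Finset.coe_filter, Finset.mem_univ, true_and, mem_ofPred_eq] at hA hA'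
    have hjj : j = j' := above_card_injective (fun l => δ l - a l) (by
      simp only [h, h', hA, hA'])
    subst hjj
    exact hne (by rw [← h, ← h'])
  calc _ ≤ _ := measure_mono hsub
    _ ≤ ∑ q ∈ I, shiftLaw k β {δ | above (fun l => δ l - a l) q.2 = q.1 ∧
          ∀ i ∈ q.1, δ i - a i ≤ δ q.2 - a q.2 + w} := measure_biUnion_finset_le _ _
    _ ≤ ∑ q ∈ I, ENNReal.ofReal (β * w) ^ t * shiftLaw k β (G q) := by
        refine Finset.sum_le_sum fun q hq => ?_
        have hc : q.1.card = t := by simpa [hI] using hq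
        have := shift_piece hβ a hw q.1 q.2
        rwa [hc] at this
    _ = ENNReal.ofReal (β * w) ^ t * shiftLaw k β (⋃ q ∈ I, G q) := by
        rw [← Finset.mul_sum, measure_biUnion_finset hdisj
          fun q _ => measurableSet_above_eq a q.1 q.2]
    _ ≤ ENNReal.ofReal (β * w) ^ t * 1 := by gcongr; exact prob_le_one
    _ = _ := mul_one _

/-! ### The clustering -/

/-- The cluster of each point: the index with the best shifted distance. -/
noncomputable def assign {U : Type*} [MetricSpace U] {k : ℕ} (hk : 0 < k) (c : Fin k → U)
    (δ : Fin k → ℝ) (u : U) : Fin k :=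
  best hk fun i => δ i - dist u (c i)

lemma assign_admissible {U : Type*} [MetricSpace U] {k : ℕ} (hk : 0 < k) (c : Fin k → U)
    (δ : Fin k → ℝ) (u : U) :
    assign hk c δ (c (assign hk c δ u)) = assign hk c δ u := by
  set i := assign hk c δ u with hi
  unfold assign
  rw [best_eq_iff]
  intro j hj
  apply not_beats_best hk (fun i => δ i - dist u (c i)) j
  change Beats _ j i
  unfold Beats at hj ⊢
  have h := dist_triangle u (c i) (c j)
  simp only [dist_self] at hj ⊢
  rcases hj with hj | ⟨hj, hlt⟩
  · left; linarith
  · rcases lt_or_eq_of_le h with h | h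
    · left; linarith
    · right; exact ⟨by linarith, hlt⟩

lemma assign_score {U : Type*} [MetricSpace U] {k : ℕ} (hk : 0 < k) (c : Fin k → U)
    (δ : Fin k → ℝ) (u : U) (l : Fin k) :
    δ l - dist u (c l) ≤ δ (assign hk c δ u) - dist u (c (assign hk c δ u)) :=
  le_best hk (fun i => δ i - dist u (c i)) l

lemma measurable_assign {U : Type*} [MetricSpace U] [Fintype U] {k : ℕ} (hk : 0 < k)
    (c : Fin k → U) :
    @Measurable _ _ _ ⊤ fun δ : Fin k → ℝ =>
      ((assign hk c δ, c) : (U → Fin k) × (Fin k → U)) := by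
  let _ : MeasurableSpace ((U → Fin k) × (Fin k → U)) := ⊤
  refine measurable_to_countable' ?_
  rintro ⟨g, σ⟩
  have : (fun δ : Fin k → ℝ => ((assign hk c δ, c) : (U → Fin k) × (Fin k → U))) ⁻¹' {(g, σ)}
      = (⋂ u, ⋂ i, {δ | Beats (fun l => δ l - dist u (c l)) i (g u)}ᶜ) ∩ {_δ | c = σ} := by
    ext δ
    simp [funext_iff, assign, best_eq_iff]
  rw [this]
  exact (MeasurableSet.iInter fun u => MeasurableSet.iInter fun i =>
    (measurableSet_beats _ i (g u)).compl).inter (MeasurableSet.const _)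

end ShiftClustering

open ShiftClustering ProbabilityTheory in
/-- Given a finite metric space `U`, `k ≥ 1`, `ψ > 0`, and an
initial `k`-center solution `c : Fin k → U` of radius `R > 0`, there exists an
admissible randomized clustering `μ` such that:
(i) for every nonempty subset `S ⊆ U` with diameter `D` and every integer
`t ≥ 1`, the probability that `f` takes more than `t` distinct values on `S`
is at most `(D/(ψR))^t`; and
(ii) the probability that the clustering radius exceeds `2R(1 + log k)` is at
most `k^{1 − 1/ψ}`. -/
theorem community_preserving_clustering_exists
    {U : Type*} [MetricSpace U] [Fintype U] [Nonempty U]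
    (k : ℕ) (hk : 1 ≤ k) (ψ : ℝ) (hψ : 0 < ψ)
    (c : Fin k → U) (R : ℝ) (hR : 0 < R)
    (hcov : ∀ u : U, ∃ i : Fin k, dist u (c i) ≤ R) :
    ∃ μ : @Measure ((U → Fin k) × (Fin k → U)) ⊤,
      @IsProbabilityMeasure _ ⊤ μ ∧
      (∀ᵐ p ∂μ, ∀ i : Fin k, (∃ u : U, p.1 u = i) → p.1 (p.2 i) = i) ∧
      (∀ S : Set U, S.Nonempty → ∀ t : ℕ, 1 ≤ t →
        μ {p | t < (p.1 '' S).ncard}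
          ≤ ENNReal.ofReal ((Metric.diam S / (ψ * R)) ^ t)) ∧
      μ {p | ∃ u : U, 2 * R * (1 + Real.log k) < dist u (p.2 (p.1 u))}
        ≤ ENNReal.ofReal ((k : ℝ) ^ (1 - 1 / ψ)) := by
  classical
  let _ : MeasurableSpace ((U → Fin k) × (Fin k → U)) := ⊤
  obtain ⟨β, hβdef⟩ : ∃ β, β = 1 / (2 * ψ * R) := ⟨_, rfl⟩
  have hβ : 0 < β := by rw [hβdef]; positivity
  have hexp := isProbabilityMeasure_expMeasure hβ
  have hprob : IsProbabilityMeasure (shiftLaw k β) := by unfold shiftLaw; infer_instance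
  have hm := measurable_assign hk c
  refine ⟨(shiftLaw k β).map fun δ => (assign hk c δ, c), ?_, ?_, ?_, ?_⟩
  · exact Measure.isProbabilityMeasure_map hm.aemeasurable
  · rw [ae_map_iff hm.aemeasurable trivial]
    refine Filter.Eventually.of_forall fun δ => ?_
    rintro i ⟨u, rfl⟩
    exact assign_admissible hk c δ u
  · intro S hS t _
    obtain ⟨v, hv⟩ := hS
    have hSb : Bornology.IsBounded S := S.toFinite.isBounded
    rw [Measure.map_apply hm trivial]
    have hkey := shift_window (k := k) hβ (fun i => dist v (c i)) (w := 2 * Metric.diam S)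
      (by have := Metric.diam_nonneg (s := S); positivity) t
    have hval : β * (2 * Metric.diam S) = Metric.diam S / (ψ * R) := by
      rw [hβdef]; field_simp
    rw [hval, ← ENNReal.ofReal_pow (by have := Metric.diam_nonneg (s := S); positivity)] at hkey
    refine (measure_mono ?_).trans hkey
    intro δ hδ
    have hfin : (assign hk c δ '' S).Finite := Set.toFinite _
    refine ⟨hfin.toFinset, ?_, ?_⟩
    · rw [← Set.ncard_eq_toFinset_card _ hfin]
      exact hδ
    · intro i hi l
      rw [Set.Finite.mem_toFinset] at hi
      obtain ⟨u, hu, rfl⟩ := hi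
      have h₁ := assign_score hk c δ u l
      have h₂ := Metric.dist_le_diam_of_mem hSb hu hv
      have h₃ := dist_triangle u v (c l)
      have h₄ := dist_triangle v u (c (assign hk c δ u))
      rw [dist_comm v u] at h₄
      linarith
  · have hk1 : (1 : ℝ) ≤ k := by exact_mod_cast hk
    have hk0 : (0 : ℝ) < k := by linarith
    have hlog : 0 ≤ Real.log k := Real.log_nonneg hk1
    set x : ℝ := R + 2 * R * Real.log k with hx
    have hx0 : 0 ≤ x := by positivity
    rw [Measure.map_apply hm trivial]
    calc _ ≤ shiftLaw k β (⋃ i, Function.eval i ⁻¹' (Set.Icc 0 x)ᶜ) := by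
          apply measure_mono
          rintro δ ⟨u, hu⟩
          by_contra hcon
          simp only [Set.mem_iUnion, Set.mem_preimage, Set.mem_compl_iff, not_exists, not_not,
            Function.eval, Set.mem_Icc] at hcon
          obtain ⟨j, hj⟩ := hcov u
          have h₁ := assign_score hk c δ u j
          have h₂ := (hcon (assign hk c δ u)).2
          have h₃ := (hcon j).1
          dsimp only at hu
          linarith
      _ ≤ ∑ i : Fin k, shiftLaw k β (Function.eval i ⁻¹' (Set.Icc 0 x)ᶜ) :=
          measure_iUnion_fintype_le _ _
      _ ≤ ∑ _i : Fin k, ENNReal.ofReal (Real.exp (-(β * x))) := by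
          refine Finset.sum_le_sum fun i _ => ?_
          unfold shiftLaw
          rw [(measurePreserving_eval (fun _ : Fin k => expMeasure β) i).measure_preimage
            measurableSet_Icc.compl.nullMeasurableSet]
          exact expMeasure_outside hβ hx0
      _ = ENNReal.ofReal (k * Real.exp (-(β * x))) := by
          rw [ENNReal.ofReal_mul hk0.le]
          simp
      _ ≤ _ := by
          apply ENNReal.ofReal_le_ofReal
          have hpow : (k : ℝ) ^ (1 - 1 / ψ) = k * Real.exp (-(Real.log k / ψ)) := by
            rw [Real.rpow_def_of_pos hk0]
            nth_rewrite 2 [← Real.exp_log hk0]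
            rw [← Real.exp_add]
            ring_nf
          rw [hpow]
          gcongr
          have : β * x = 1 / (2 * ψ) + Real.log k / ψ := by
            rw [hβdef, hx]; field_simp
          rw [this]
          have : 0 < 1 / (2 * ψ) := by positivity
          linarith
end

section
/- Let (U, d) be a finite metric space, k ≥ 1 an integer, ψ > 0 a real number, and let c_1, …, c_k ∈ U and R > 0 be an initial k-center solution of radius R (every point of U is within distance R of some c_i). Then there exists a single admissible randomized clustering μ that simultaneously satisfies: (i) for every pair u, v ∈ U, the μ-probability that u and v are separated is at most d(u, v) / (ψ R); (ii) for every nonempty subset S ⊆ U with diameter D = max_{u, v ∈ S} d(u, v) and every integer t ≥ 1, the μ-probability that f takes more than t distinct values on S is at most (D / (ψ R))^t; and (iii) the μ-probability that the radius of the clustering exceeds 2 R (1 + log k) is at most k^{1 − 1/ψ}. -/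
/-!
The clustering comes from exponentially shifted Voronoi cells. Draw independent shifts
`ω i ~ Exp(r)` with rate `r = 1 / (2ψR)`, let `u` join the cluster `i` maximizing
`ω i - dist u (c i)` (smallest index in case of a tie), and let `c i` be the center of cluster `i`.

*Admissibility.* By the triangle inequality, if `i` wins at some `u` then `i` also wins at `c i`
(`IsFirstMax.center`).

*Separation and communities.* Fix `u₀ ∈ S` and let `D` be the diameter of `S`. Every cluster
meeting `S` has its value `ω i - dist u₀ (c i)` within `2D` of the maximum. The heart of the
argument is `pi_near_max_le`: more than `t` of the shifted variables lie within `s` of their maximum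
with probability at most `(1 - exp (-r s)) ^ t`. Indeed, let `T` be the set of the `t` largest
variables. Given the variables outside `T`, with maximum `M`, those in `T` are independent and
conditioned to exceed `M`, so by memorylessness (`exp_slab`) each of them is at most `M + s` with
conditional probability at most `1 - exp (-r s)`; the events indexed by the different `T` are
disjoint, so summing over `T` gives the bound. For `s = 2D` this is at most `(D / (ψR)) ^ t`. The
bound for pairs is the case `S = {u, v}`, `t = 1`.

*Radius.* Since `u` is within `R` of some center and the shifts are nonnegative, the winner `i` at
`u` satisfies `dist u (c i) ≤ ω i + R`. A union bound over the `k` events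
`ω i > R (1 + 2 log k)` concludes.
-/

open MeasureTheory

/-- The `t` largest values, as a set of indices. -/
lemma exists_top {k : ℕ} (Y : Fin k → ℝ) (t : ℕ) (ht : t ≤ k) :
    ∃ T : Finset (Fin k), T.card = t ∧ ∀ i ∈ T, ∀ l ∉ T, Y l ≤ Y i := by
  induction t with
  | zero => exact ⟨∅, by simp⟩
  | succ t ih =>
    obtain ⟨T, hT, h⟩ := ih (by omega)
    have hne : (Tᶜ).Nonempty := by
      rw [← Finset.card_pos, Finset.card_compl, Fintype.card_fin]; omega
    obtain ⟨m, hm, hmax⟩ := Finset.exists_max_image Tᶜ Y hne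
    rw [Finset.mem_compl] at hm
    refine ⟨insert m T, by rw [Finset.card_insert_of_notMem hm, hT], ?_⟩
    intro i hi l hl
    rw [Finset.mem_insert, not_or] at hl
    rcases Finset.mem_insert.1 hi with rfl | hi
    · exact hmax l (Finset.mem_compl.2 hl.2)
    · exact h i hi l hl.2

/-- Conditioning on the coordinates outside `T`: if each coordinate in `T` has to lie in a slab of
width `s` above the maximum `M` of the shifted outside coordinates, then, compared with merely
exceeding `M`, each coordinate in `T` costs a factor `q`. The maximum is not named, so that both
events are plain finite combinations of inequalities between coordinates. -/
lemma pi_slab_le {k : ℕ} (ν : Measure ℝ) [IsProbabilityMeasure ν]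
    (d : Fin k → ℝ) (s : ℝ) (q : ENNReal)
    (hq : q ≠ ⊤) (hν : ∀ a, ν (Set.Icc a (a + s)) ≤ q * ν (Set.Ioi a))
    (T : Finset (Fin k)) (hT : T.card < k) :
    Measure.pi (fun _ : Fin k => ν) {ω | ∀ i ∈ T, (∀ l ∉ T, ω l - d l ≤ ω i - d i) ∧
        ∃ l, l ∉ T ∧ ω i - d i ≤ ω l - d l + s} ≤
      q ^ T.card * Measure.pi (fun _ : Fin k => ν)
        {ω | ∀ i ∈ T, ∀ l ∉ T, ω l - d l < ω i - d i} := by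
  classical
  set B := {ω : Fin k → ℝ | ∀ i ∈ T, (∀ l ∉ T, ω l - d l ≤ ω i - d i) ∧
        ∃ l, l ∉ T ∧ ω i - d i ≤ ω l - d l + s} with hB
  set G := {ω : Fin k → ℝ | ∀ i ∈ T, ∀ l ∉ T, ω l - d l < ω i - d i} with hG
  have hBm : MeasurableSet B := by rw [hB]; measurability
  have hGm : MeasurableSet G := by rw [hG]; measurability
  let e := MeasurableEquiv.piEquivPiSubtypeProd (fun _ : Fin k => ℝ) (fun i => i ∈ T)
  have he := (measurePreserving_piEquivPiSubtypeProd (fun _ : Fin k => ν) (fun i => i ∈ T)).symm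
  rw [← he.measure_preimage hBm.nullMeasurableSet, ← he.measure_preimage hGm.nullMeasurableSet,
    Measure.prod_apply_symm (e.symm.measurable hBm), Measure.prod_apply_symm (e.symm.measurable hGm),
    ← lintegral_const_mul' _ _ ?_]
  · refine lintegral_mono fun y => ?_
    have hne : (Tᶜ).Nonempty := by
      rw [← Finset.card_pos, Finset.card_compl, Fintype.card_fin]; omega
    have : Nonempty {i // i ∉ T} := by
      obtain ⟨l, hl⟩ := hne
      exact ⟨⟨l, Finset.mem_compl.1 hl⟩⟩
    obtain ⟨m, hm⟩ := Finite.exists_max (fun l : {i // i ∉ T} => y l - d l)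
    -- The threshold that `ω i` has to reach for `ω i - d i` to reach the maximum outside `T`.
    let a : {i // i ∈ T} → ℝ := fun i => y m - d m + d i
    have hin : ∀ (x : {i // i ∈ T} → ℝ) (i : Fin k) (hi : i ∈ T), e.symm (x, y) i = x ⟨i, hi⟩ := by
      intro x i hi
      exact dif_pos hi
    have hout : ∀ (x : {i // i ∈ T} → ℝ) (i : Fin k) (hi : i ∉ T),
        e.symm (x, y) i = y ⟨i, hi⟩ := by
      intro x i hi
      exact dif_neg hi
    -- `T` carries two syntactically different `Fintype` instances on its subtype.
    rw [Subsingleton.elim (Subtype.fintype fun i => i ∈ T) (Finset.Subtype.fintype T)]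
    calc Measure.pi (fun _ : {i // i ∈ T} => ν) ((fun x => (x, y)) ⁻¹' (e.symm ⁻¹' B))
        ≤ Measure.pi (fun _ : {i // i ∈ T} => ν)
            (Set.univ.pi fun i => Set.Icc (a i) (a i + s)) := by
          refine measure_mono ?_
          intro x hx i _
          obtain ⟨h1, l, hl, h2⟩ := (show e.symm (x, y) ∈ B from hx) i.1 i.2
          have h1 := h1 m.1 m.2
          rw [hin x i.1 i.2, hout x m.1 m.2] at h1
          rw [hin x i.1 i.2, hout x l hl] at h2
          have h3 := hm ⟨l, hl⟩
          simp only [Subtype.coe_eta] at h1 h2 h3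
          constructor
          · simp only [a]; linarith
          · simp only [a]; linarith
      _ = ∏ i, ν (Set.Icc (a i) (a i + s)) := Measure.pi_pi _ _
      _ ≤ ∏ i, (q * ν (Set.Ioi (a i))) := Finset.prod_le_prod' fun i _ => hν (a i)
      _ = q ^ T.card * Measure.pi (fun _ : {i // i ∈ T} => ν)
            (Set.univ.pi fun i => Set.Ioi (a i)) := by
          rw [Finset.prod_mul_distrib, Measure.pi_pi]
          simp
      _ ≤ q ^ T.card * Measure.pi (fun _ : {i // i ∈ T} => ν)
            ((fun x => (x, y)) ⁻¹' (e.symm ⁻¹' G)) := by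
          gcongr
          intro x hx
          change e.symm (x, y) ∈ G
          intro i hi l hl
          have h1 : a ⟨i, hi⟩ < x ⟨i, hi⟩ := hx ⟨i, hi⟩ (Set.mem_univ _)
          have h3 := hm ⟨l, hl⟩
          rw [hin x i hi, hout x l hl]
          simp only [a] at h1 h3
          linarith
  · exact ENNReal.pow_ne_top hq

/-- More than `t` of the independent variables `ω i - d i` lie within `s` of the maximum with
probability at most `q ^ t`. -/
lemma pi_near_max_le {k : ℕ} (ν : Measure ℝ) [IsProbabilityMeasure ν]
    (d : Fin k → ℝ) (s : ℝ) (q : ENNReal)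
    (hq : q ≠ ⊤) (hν : ∀ a, ν (Set.Icc a (a + s)) ≤ q * ν (Set.Ioi a)) (t : ℕ) :
    Measure.pi (fun _ : Fin k => ν)
      {ω | t < {i | ∀ j, ω j - d j ≤ ω i - d i + s}.ncard} ≤ q ^ t := by
  classical
  let P := Measure.pi (fun _ : Fin k => ν)
  let B : Finset (Fin k) → Set (Fin k → ℝ) := fun T =>
    {ω | ∀ i ∈ T, (∀ l ∉ T, ω l - d l ≤ ω i - d i) ∧ ∃ l, l ∉ T ∧ ω i - d i ≤ ω l - d l + s}
  let G : Finset (Fin k) → Set (Fin k → ℝ) := fun T =>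
    {ω | ∀ i ∈ T, ∀ l ∉ T, ω l - d l < ω i - d i}
  rcases le_or_gt k t with hkt | hkt
  · have : {ω : Fin k → ℝ | t < {i | ∀ j, ω j - d j ≤ ω i - d i + s}.ncard} = ∅ := by
      ext ω
      simp only [Set.mem_ofPred_eq, Set.mem_empty_iff_false, iff_false, not_lt]
      refine (Set.ncard_le_card _).trans ?_
      simpa using hkt
    rw [this]; simp
  let F := Finset.powersetCard t (Finset.univ : Finset (Fin k))
  have hF : ∀ T ∈ F, T.card = t := fun T hT => (Finset.mem_powersetCard.1 hT).2
  have hGm : ∀ T, MeasurableSet (G T) := by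
    intro T; simp only [G]; measurability
  have hdisj : (F : Set (Finset (Fin k))).PairwiseDisjoint G := by
    intro T hT T' hT' hne
    have hc := hF T hT
    have hc' := hF T' hT'
    refine Set.disjoint_left.2 fun ω h h' => ?_
    obtain ⟨i, hi, hi'⟩ := Finset.not_subset.1
      (fun hs : T ⊆ T' => hne (Finset.eq_of_subset_of_card_le hs (by omega)))
    obtain ⟨l, hl, hl'⟩ := Finset.not_subset.1
      (fun hs : T' ⊆ T => hne (Finset.eq_of_subset_of_card_le hs (by omega)).symm)
    exact lt_asymm (h i hi l hl') (h' l hl i hi')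
  calc P {ω | t < {i | ∀ j, ω j - d j ≤ ω i - d i + s}.ncard}
      ≤ P (⋃ T ∈ F, B T) := by
        refine measure_mono fun ω hω => ?_
        obtain ⟨T, hTc, hT⟩ := exists_top (fun i => ω i - d i) t hkt.le
        have : ¬ {i | ∀ j, ω j - d j ≤ ω i - d i + s} ⊆ (T : Set (Fin k)) := fun hs => by
          have h := Set.ncard_le_ncard hs
          rw [Set.ncard_coe_finset, hTc] at h
          exact absurd hω (not_lt.2 h)
        obtain ⟨l, hl, hlT⟩ := Set.not_subset.1 this
        simp only [Set.mem_iUnion]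
        exact ⟨T, Finset.mem_powersetCard.2 ⟨Finset.subset_univ _, hTc⟩,
          fun i hi => ⟨hT i hi, l, hlT, hl i⟩⟩
    _ ≤ ∑ T ∈ F, P (B T) := measure_biUnion_finset_le _ _
    _ ≤ ∑ T ∈ F, q ^ t * P (G T) := by
        refine Finset.sum_le_sum fun T hT => ?_
        have := pi_slab_le ν d s q hq hν T (by rw [hF T hT]; exact hkt)
        rwa [hF T hT] at this
    _ = q ^ t * P (⋃ T ∈ F, G T) := by
        rw [← Finset.mul_sum, measure_biUnion_finset hdisj fun T _ => hGm T]
    _ ≤ q ^ t * 1 := by gcongr; exact prob_le_one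
    _ = q ^ t := mul_one _

lemma exp_Iic {r : ℝ} (hr : 0 < r) (x : ℝ) : ProbabilityTheory.expMeasure r (Set.Iic x) =
    ENNReal.ofReal (if 0 ≤ x then 1 - Real.exp (-(r * x)) else 0) := by
  have := ProbabilityTheory.isProbabilityMeasure_expMeasure hr
  rw [← ProbabilityTheory.cdf_expMeasure_eq hr, ProbabilityTheory.ofReal_cdf]

lemma exp_Ioi {r : ℝ} (hr : 0 < r) (x : ℝ) : ProbabilityTheory.expMeasure r (Set.Ioi x) =
    ENNReal.ofReal (if 0 ≤ x then Real.exp (-(r * x)) else 1) := by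
  have := ProbabilityTheory.isProbabilityMeasure_expMeasure hr
  rw [← Set.compl_Iic, prob_compl_eq_one_sub measurableSet_Iic, exp_Iic hr,
    ← ENNReal.ofReal_one, ← ENNReal.ofReal_sub]
  · split_ifs <;> simp
  · split_ifs with h
    · simp only [sub_nonneg, Real.exp_le_one_iff, Left.neg_nonpos_iff]
      positivity
    · exact le_rfl

/-- Memorylessness of the exponential distribution, as an inequality because `a` may be negative. -/
lemma exp_slab {r : ℝ} (hr : 0 < r) {s : ℝ} (hs : 0 ≤ s) (a : ℝ) :
    ProbabilityTheory.expMeasure r (Set.Icc a (a + s)) ≤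
      ENNReal.ofReal (1 - Real.exp (-(r * s))) * ProbabilityTheory.expMeasure r (Set.Ioi a) := by
  have := ProbabilityTheory.isProbabilityMeasure_expMeasure hr
  have hq : 0 ≤ 1 - Real.exp (-(r * s)) := by
    simp only [sub_nonneg, Real.exp_le_one_iff, Left.neg_nonpos_iff]
    positivity
  have hatom : ProbabilityTheory.expMeasure r {a} = 0 := by
    unfold ProbabilityTheory.expMeasure ProbabilityTheory.gammaMeasure
    exact withDensity_absolutelyContinuous _ _ (by simp)
  have hIcc : ProbabilityTheory.expMeasure r (Set.Icc a (a + s)) ≤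
      ProbabilityTheory.expMeasure r (Set.Iic (a + s)) -
        ProbabilityTheory.expMeasure r (Set.Iic a) := by
    rw [← measure_sdiff (Set.Iic_subset_Iic.2 (by linarith)) measurableSet_Iic.nullMeasurableSet
      (measure_ne_top _ _)]
    calc _ ≤ ProbabilityTheory.expMeasure r ({a} ∪ Set.Iic (a + s) \ Set.Iic a) := by
          refine measure_mono fun x hx => ?_
          rcases hx.1.eq_or_lt with h | h
          · exact Or.inl h.symm
          · exact Or.inr ⟨hx.2, not_le.2 h⟩
      _ ≤ _ := (measure_union_le _ _).trans (by rw [hatom, zero_add])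
  refine hIcc.trans ?_
  rw [exp_Iic hr, exp_Iic hr, exp_Ioi hr, ← ENNReal.ofReal_mul hq]
  rw [← ENNReal.ofReal_sub]
  · refine ENNReal.ofReal_le_ofReal ?_
    rcases le_or_gt 0 a with ha | ha
    · rw [if_pos ha, if_pos ha, if_pos (by linarith)]
      have : Real.exp (-(r * (a + s))) = Real.exp (-(r * a)) * Real.exp (-(r * s)) := by
        rw [← Real.exp_add]; ring_nf
      rw [this]
      linarith
    · rw [if_neg (not_le.2 ha), if_neg (not_le.2 ha)]
      split_ifs with h
      · have : Real.exp (-(r * s)) ≤ Real.exp (-(r * (a + s))) :=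
          Real.exp_le_exp.2 (by nlinarith)
        linarith
      · linarith
  · split_ifs with h
    · simp only [sub_nonneg, Real.exp_le_one_iff, Left.neg_nonpos_iff]
      positivity
    · exact le_rfl

/-- `i` is the smallest index at which `Y` is maximal. -/
def IsFirstMax {k : ℕ} (Y : Fin k → ℝ) (i : Fin k) : Prop :=
  ∀ j, Y j ≤ Y i ∧ (j < i → Y j < Y i)

lemma exists_isFirstMax {k : ℕ} (hk : 1 ≤ k) (Y : Fin k → ℝ) : ∃ i, IsFirstMax Y i := by
  classical
  have : Nonempty (Fin k) := ⟨⟨0, hk⟩⟩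
  obtain ⟨m, hm⟩ := Finite.exists_max Y
  obtain ⟨i, hi, hmin⟩ := Finset.exists_min_image (Finset.univ.filter fun i => Y i = Y m) id
    ⟨m, by simp⟩
  rw [Finset.mem_filter] at hi
  refine ⟨i, fun j => ⟨hi.2 ▸ hm j, fun hj => lt_of_le_of_ne (hi.2 ▸ hm j) fun h => ?_⟩⟩
  exact absurd (hmin j (by simp [h, hi.2])) (not_le.2 hj)

lemma IsFirstMax.unique {k : ℕ} {Y : Fin k → ℝ} {i j : Fin k} (hi : IsFirstMax Y i)
    (hj : IsFirstMax Y j) : i = j := by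
  rcases lt_trichotomy i j with h | h | h
  · exact absurd ((hj i).2 h) (not_lt.2 (hi j).1)
  · exact h
  · exact absurd ((hi j).2 h) (not_lt.2 (hj i).1)

/-- A nonempty cluster contains its center, also in the presence of ties. -/
lemma IsFirstMax.center {U : Type*} [MetricSpace U] {k : ℕ} {c : Fin k → U} {ω : Fin k → ℝ}
    {u : U} {i : Fin k} (h : IsFirstMax (fun j => ω j - dist u (c j)) i) :
    IsFirstMax (fun j => ω j - dist (c i) (c j)) i := by
  intro j
  have h1 := h j
  have h2 := dist_triangle u (c i) (c j)
  simp only [dist_self] at h1 ⊢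
  exact ⟨by linarith [h1.1], fun hj => by linarith [h1.2 hj]⟩

/-- Given a finite metric space `U`, `k ≥ 1`, `ψ > 0`, and an
initial `k`-center solution `c : Fin k → U` of radius `R > 0`, there exists a
single admissible randomized clustering `μ` that simultaneously satisfies:
(i) every pair `u, v` is separated with probability at most `d(u,v)/(ψR)`;
(ii) for every nonempty subset `S ⊆ U` with diameter `D` and every integer
`t ≥ 1`, the probability that `f` takes more than `t` distinct values on `S`
is at most `(D/(ψR))^t`; and
(iii) the probability that the clustering radius exceeds `2R(1 + log k)` is at
most `k^{1 − 1/ψ}`. -/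
theorem fair_and_community_preserving_clustering_exists
    {U : Type*} [MetricSpace U] [Fintype U] [Nonempty U]
    (k : ℕ) (hk : 1 ≤ k) (ψ : ℝ) (hψ : 0 < ψ)
    (c : Fin k → U) (R : ℝ) (hR : 0 < R)
    (hcov : ∀ u : U, ∃ i : Fin k, dist u (c i) ≤ R) :
    ∃ μ : @Measure ((U → Fin k) × (Fin k → U)) ⊤,
      @IsProbabilityMeasure _ ⊤ μ ∧
      (∀ᵐ p ∂μ, ∀ i : Fin k, (∃ u : U, p.1 u = i) → p.1 (p.2 i) = i) ∧
      (∀ u v : U,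
        μ {p | p.1 u ≠ p.1 v} ≤ ENNReal.ofReal (dist u v / (ψ * R))) ∧
      (∀ S : Set U, S.Nonempty → ∀ t : ℕ, 1 ≤ t →
        μ {p | t < (p.1 '' S).ncard}
          ≤ ENNReal.ofReal ((Metric.diam S / (ψ * R)) ^ t)) ∧
      μ {p | ∃ u : U, 2 * R * (1 + Real.log k) < dist u (p.2 (p.1 u))}
        ≤ ENNReal.ofReal ((k : ℝ) ^ (1 - 1 / ψ)) := by
  classical
  choose f hf using fun (ω : Fin k → ℝ) (u : U) =>
    exists_isFirstMax hk (fun j => ω j - dist u (c j))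
  obtain ⟨r, hr⟩ : ∃ r : ℝ, r = 1 / (2 * (ψ * R)) := ⟨_, rfl⟩
  have hr0 : 0 < r := by rw [hr]; positivity
  have hν := ProbabilityTheory.isProbabilityMeasure_expMeasure hr0
  let P : Measure (Fin k → ℝ) := Measure.pi fun _ => ProbabilityTheory.expMeasure r
  let Φ : (Fin k → ℝ) → (U → Fin k) × (Fin k → U) := fun ω => (f ω, c)
  let _ : MeasurableSpace ((U → Fin k) × (Fin k → U)) := ⊤
  have hfm : ∀ u i, MeasurableSet {ω | f ω u = i} := by
    intro u i
    have : {ω | f ω u = i} = {ω : Fin k → ℝ | ∀ j, ω j - dist u (c j) ≤ ω i - dist u (c i) ∧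
        (j < i → ω j - dist u (c j) < ω i - dist u (c i))} := by
      ext ω
      constructor
      · rintro rfl
        exact hf ω u
      · exact fun h => (hf ω u).unique h
    rw [this]
    measurability
  have hΦ : Measurable Φ := by
    refine measurable_to_countable' fun p => ?_
    by_cases hc : c = p.2
    · have : Φ ⁻¹' {p} = ⋂ u, {ω | f ω u = p.1 u} := by
        ext ω
        simp [Φ, Prod.ext_iff, hc, funext_iff]
      rw [this]
      exact MeasurableSet.iInter fun u => hfm u _
    · have : Φ ⁻¹' {p} = ∅ := by
        ext ω
        simp [Φ, Prod.ext_iff, hc]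
      rw [this]
      exact MeasurableSet.empty
  have hmap : ∀ A, P.map Φ A = P (Φ ⁻¹' A) := fun A =>
    Measure.map_apply hΦ MeasurableSpace.measurableSet_top
  have hcomm : ∀ S : Set U, S.Nonempty → ∀ t : ℕ, 1 ≤ t →
      P.map Φ {p | t < (p.1 '' S).ncard} ≤
        ENNReal.ofReal ((Metric.diam S / (ψ * R)) ^ t) := by
    rintro S ⟨u₀, hu₀⟩ t -
    have hD : 0 ≤ 2 * Metric.diam S := by have := Metric.diam_nonneg (s := S); positivity
    rw [hmap]
    calc P (Φ ⁻¹' {p | t < (p.1 '' S).ncard})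
        ≤ P {ω | t < {i | ∀ j, ω j - dist u₀ (c j) ≤
            ω i - dist u₀ (c i) + 2 * Metric.diam S}.ncard} := by
          refine measure_mono fun ω hω => ?_
          refine lt_of_lt_of_le (show t < (f ω '' S).ncard from hω) (Set.ncard_le_ncard ?_)
          rintro _ ⟨u, hu, rfl⟩ j
          have h1 := (hf ω u j).1
          have h2 := Metric.dist_le_diam_of_mem (Set.toFinite S).isBounded hu₀ hu
          have h3 := dist_triangle u u₀ (c j)
          have h4 := dist_triangle u₀ u (c (f ω u))
          rw [dist_comm u u₀] at h3
          simp only at h1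
          linarith
      _ ≤ ENNReal.ofReal (1 - Real.exp (-(r * (2 * Metric.diam S)))) ^ t :=
          pi_near_max_le _ _ _ _ ENNReal.ofReal_ne_top (exp_slab hr0 hD) t
      _ ≤ ENNReal.ofReal (Metric.diam S / (ψ * R)) ^ t := by
          gcongr
          have h1 := Real.add_one_le_exp (-(r * (2 * Metric.diam S)))
          have h2 : r * (2 * Metric.diam S) = Metric.diam S / (ψ * R) := by
            rw [hr]; field_simp
          linarith
      _ = _ := (ENNReal.ofReal_pow (by have := Metric.diam_nonneg (s := S); positivity) t).symm
  refine ⟨P.map Φ, Measure.isProbabilityMeasure_map hΦ.aemeasurable, ?_, ?_, hcomm, ?_⟩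
  · rw [ae_map_iff hΦ.aemeasurable MeasurableSpace.measurableSet_top]
    refine ae_of_all _ fun ω i => ?_
    rintro ⟨u, rfl⟩
    exact (hf ω _).unique (hf ω u).center
  · intro u v
    have h := hcomm {u, v} (Set.insert_nonempty _ _) 1 le_rfl
    rw [Metric.diam_pair, pow_one] at h
    refine le_trans (measure_mono fun p (hp : p.1 u ≠ p.1 v) => ?_) h
    change 1 < (p.1 '' {u, v}).ncard
    rw [Set.image_pair, Set.ncard_pair hp]
    exact one_lt_two
  · have hk1 : (1 : ℝ) ≤ k := by exact_mod_cast hk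
    have hk0 : (0 : ℝ) < k := by linarith
    have hlog := Real.log_nonneg hk1
    obtain ⟨x, hx⟩ : ∃ x : ℝ, x = R * (1 + 2 * Real.log k) := ⟨_, rfl⟩
    have hx0 : 0 ≤ x := by rw [hx]; positivity
    rw [hmap]
    calc P (Φ ⁻¹' {p | ∃ u : U, 2 * R * (1 + Real.log k) < dist u (p.2 (p.1 u))})
        ≤ P (⋃ i : Fin k, Function.eval i ⁻¹' (Set.Iic 0 ∪ Set.Ioi x)) := by
          refine measure_mono ?_
          rintro ω ⟨u, hu⟩
          change 2 * R * (1 + Real.log k) < dist u (c (f ω u)) at hu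
          obtain ⟨i, hi⟩ := hcov u
          have h1 := (hf ω u i).1
          simp only at h1
          rw [Set.mem_iUnion]
          by_cases h : ω i ≤ 0
          · exact ⟨i, Or.inl h⟩
          · refine ⟨f ω u, Or.inr ?_⟩
            change x < ω (f ω u)
            rw [hx]
            linarith
      _ ≤ ∑ i : Fin k, P (Function.eval i ⁻¹' (Set.Iic 0 ∪ Set.Ioi x)) :=
          measure_iUnion_fintype_le _ _
      _ ≤ ∑ _i : Fin k, ENNReal.ofReal (Real.exp (-(r * x))) := by
          refine Finset.sum_le_sum fun i _ => ?_
          rw [(measurePreserving_eval (fun _ : Fin k => ProbabilityTheory.expMeasure r)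
            i).measure_preimage (measurableSet_Iic.union measurableSet_Ioi).nullMeasurableSet]
          refine (measure_union_le _ _).trans ?_
          rw [exp_Iic hr0, exp_Ioi hr0, if_pos hx0]
          simp
      _ = ENNReal.ofReal (k * Real.exp (-(r * x))) := by
          rw [ENNReal.ofReal_mul hk0.le]; simp
      _ ≤ ENNReal.ofReal ((k : ℝ) ^ (1 - 1 / ψ)) := by
          refine ENNReal.ofReal_le_ofReal ?_
          rw [Real.rpow_def_of_pos hk0]
          nth_rewrite 1 [← Real.exp_log hk0]
          rw [← Real.exp_add]
          refine Real.exp_le_exp.2 ?_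
          have h1 : r * x = 1 / (2 * ψ) + Real.log k * (1 / ψ) := by
            rw [hr, hx]; field_simp
          have h2 : 0 ≤ 1 / (2 * ψ) := by positivity
          rw [h1]
          linarith
end

section
/- Let (U, d) be a finite metric space, k ≥ 1 an integer, and let c_1, …, c_k ∈ U and R > 0 be an initial k-center solution of radius R (every point of U is within distance R of some c_i). For every δ > 0 and every T > 0 there exists an admissible randomized clustering μ such that: (i) for every pair u, v ∈ U, the μ-probability that u and v are separated is at most d(u, v) / δ; and (ii) the μ-probability that the radius of the clustering exceeds 2 (R + T) is at most k · e^{−T/δ}. -/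
open MeasureTheory

/-!
The clustering is obtained by carving balls with independent exponential radii. Draw independent
`X i` with mean `δ`, and let center `c i` capture `u` when `dist u (c i) ≤ R + max (X i) 0`
(the truncation removes the null event `X i < 0`, so that the covering hypothesis makes every point
captured surely). Each point joins the first center that captures it, and each nonempty cluster
designates any one of its members; two members of cluster `i` are at distance at most
`2 (R + max (X i) 0)`, so a radius above `2 (R + T)` forces `X i > T` for some `i`, and the union
bound gives `k e^{-T/δ}`.

For the separation bound, fix `u, v` and look at the first center capturing at least one of them.
By memorylessness (`exp_gap_le`), given that it captures the nearer point, it misses the farther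
one with probability at most `dist u v / δ`. The events "the first center capturing one of them is
`i`" are disjoint boxes in the product space, so the conditional bounds add up to
`dist u v / δ` (`first_capture_le`).
-/

open ProbabilityTheory in
lemma exp_Ici (r : ℝ) (hr : 0 < r) (x : ℝ) (hx : 0 ≤ x) :
    (expMeasure r) (Set.Ici x) = ENNReal.ofReal (Real.exp (-(r * x))) := by
  have := isProbabilityMeasure_expMeasure hr
  have hna : NullSingletonClass (expMeasure r) := by
    unfold expMeasure gammaMeasure; infer_instance
  have h := cdf_expMeasure_eq hr x
  rw [if_pos hx, cdf_eq_real] at h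
  rw [measure_congr (Ioi_ae_eq_Ici (a := x)).symm, ← Set.compl_Iic, ← ofReal_measureReal,
    measureReal_compl measurableSet_Iic, h]
  simp

/-- Memorylessness of the exponential law of mean `δ`, in the form used for one center: given that
the truncated variable reaches the level `a`, it stays below the level `b ≤ a + d` with probability
at most `d / δ`. -/
lemma exp_gap_le (δ : ℝ) (hδ : 0 < δ) (a b d : ℝ) (hab : a ≤ b) (hbd : b ≤ a + d) :
    (ProbabilityTheory.expMeasure (1 / δ)) ({x | a ≤ max x 0} \ {x | b ≤ max x 0}) ≤
      ENNReal.ofReal (d / δ) * (ProbabilityTheory.expMeasure (1 / δ)) {x | a ≤ max x 0} := by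
  have hr : 0 < 1 / δ := by positivity
  have := ProbabilityTheory.isProbabilityMeasure_expMeasure hr
  set ν := ProbabilityTheory.expMeasure (1 / δ) with hν
  have hset : ∀ t : ℝ, 0 < t → {x : ℝ | t ≤ max x 0} = Set.Ici t := by
    intro t ht; ext x; simp [ht]
  have huniv : ∀ t : ℝ, t ≤ 0 → {x : ℝ | t ≤ max x 0} = Set.univ := by
    intro t ht; ext x; simp [ht]
  have hmeas : ∀ t : ℝ, ν {x : ℝ | t ≤ max x 0} =
      ENNReal.ofReal (Real.exp (-(1 / δ * max t 0))) := by
    intro t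
    rcases le_or_gt t 0 with ht | ht
    · rw [huniv t ht, max_eq_right ht]; simp
    · rw [hset t ht, max_eq_left ht.le, hν, exp_Ici _ hr t ht.le]
  have hsub : {x : ℝ | b ≤ max x 0} ⊆ {x | a ≤ max x 0} := fun x hx => hab.trans hx
  rw [measure_sdiff hsub
    (measurableSet_le measurable_const (measurable_id.max measurable_const)).nullMeasurableSet
    (measure_ne_top _ _), hmeas, hmeas, ← ENNReal.ofReal_sub _ (Real.exp_pos _).le,
    ← ENNReal.ofReal_mul (div_nonneg (by linarith) hδ.le)]
  apply ENNReal.ofReal_le_ofReal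
  have hd : 0 ≤ d := by linarith
  have h1 : max b 0 ≤ max a 0 + d := by
    apply max_le
    · linarith [le_max_left a 0]
    · linarith [le_max_right a 0]
  have h2 : -(1 / δ * max b 0) ≥ -(1 / δ * max a 0) + -(d / δ) := by
    have := mul_le_mul_of_nonneg_left h1 hr.le
    have e : d / δ = 1 / δ * d := by ring
    rw [e]; linarith
  have h3 := Real.exp_le_exp.2 h2
  rw [Real.exp_add] at h3
  have h4 := Real.add_one_le_exp (-(d / δ))
  nlinarith [Real.exp_pos (-(1 / δ * max a 0))]

/-- The set where coordinate `i` lies in `s` and every earlier coordinate `j` lies outside `A j`;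
for `s = A i` this is the event that `i` is the first index with `x i ∈ A i`. -/
def firstBox {k : ℕ} (A : Fin k → Set ℝ) (i : Fin k) (s : Set ℝ) : Set (Fin k → ℝ) :=
  Set.univ.pi (Function.update (fun j => if j < i then (A j)ᶜ else Set.univ) i s)

lemma mem_firstBox {k : ℕ} (A : Fin k → Set ℝ) (i : Fin k) (s : Set ℝ) (x : Fin k → ℝ) :
    x ∈ firstBox A i s ↔ x i ∈ s ∧ ∀ j < i, x j ∉ A j := by
  simp only [firstBox, Set.mem_univ_pi]
  constructor
  · intro h
    refine ⟨by simpa using h i, fun j hj => ?_⟩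
    have := h j
    rw [Function.update_of_ne hj.ne, if_pos hj] at this
    exact this
  · rintro ⟨h, h'⟩ j
    by_cases e : j = i
    · subst e; simpa using h
    · rw [Function.update_of_ne e]
      split_ifs with hj
      · exact h' j hj
      · trivial

/-- If, in each coordinate separately, failing `B` costs at most a fraction `ε` of `A`, then the
first coordinate to enter its `A` also fails its `B` with probability at most `ε`. -/
lemma first_capture_le {k : ℕ} (ν : Measure ℝ) [IsProbabilityMeasure ν] (A B : Fin k → Set ℝ)
    (hA : ∀ i, MeasurableSet (A i)) (ε : ENNReal)
    (h : ∀ i, ν (A i \ B i) ≤ ε * ν (A i)) :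
    (Measure.pi fun _ : Fin k => ν) (⋃ i, firstBox A i (A i \ B i)) ≤ ε := by
  set P := Measure.pi fun _ : Fin k => ν
  have hbox : ∀ i s, P (firstBox A i s) =
      ν s * ∏ j ∈ Finset.univ \ {i}, ν (if j < i then (A j)ᶜ else Set.univ) := by
    intro i s
    rw [firstBox, Measure.pi_pi, ← Finset.mul_prod_erase _ _ (Finset.mem_univ i),
      Function.update_self, Finset.sdiff_singleton_eq_erase]
    congr 1
    refine Finset.prod_congr rfl fun j hj => ?_
    rw [Function.update_of_ne (Finset.ne_of_mem_erase hj)]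
  have hdisj : Pairwise (Function.onFun Disjoint fun i => firstBox A i (A i)) := by
    intro i j hij
    refine Set.disjoint_left.2 fun x hi hj => ?_
    rw [mem_firstBox] at hi hj
    rcases lt_or_gt_of_ne hij with hlt | hlt
    · exact hj.2 i hlt hi.1
    · exact hi.2 j hlt hj.1
  have hmeas : ∀ i, MeasurableSet (firstBox A i (A i)) := by
    intro i
    refine MeasurableSet.univ_pi fun j => ?_
    by_cases e : j = i
    · subst e; simpa using hA j
    · rw [Function.update_of_ne e]
      split_ifs
      · exact (hA j).compl
      · exact MeasurableSet.univ
  calc P (⋃ i, firstBox A i (A i \ B i)) ≤ ∑ i, P (firstBox A i (A i \ B i)) :=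
        measure_iUnion_fintype_le _ _
    _ ≤ ∑ i, ε * P (firstBox A i (A i)) := by
        refine Finset.sum_le_sum fun i _ => ?_
        rw [hbox, hbox, ← mul_assoc]
        gcongr
        exact h i
    _ = ε * P (⋃ i, firstBox A i (A i)) := by
        rw [← Finset.mul_sum, measure_iUnion hdisj hmeas, tsum_fintype]
    _ ≤ ε := by
        calc _ ≤ ε * 1 := by gcongr; exact prob_le_one
          _ = ε := mul_one _

/-- Given that center `c i` captures points exactly when `dist u (c i) ≤ ρ i`, if every point is
captured and `f` assigns each point to the first center capturing it, a separated pair `u, v`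
has a first center capturing one of the two points, and that center misses the other. -/
lemma separated_first {U : Type*} [MetricSpace U] {k : ℕ} (c : Fin k → U) (ρ : Fin k → ℝ)
    (f : U → Fin k)
    (hf : ∀ u, dist u (c (f u)) ≤ ρ (f u) ∧ ∀ j < f u, ¬ dist u (c j) ≤ ρ j)
    (u v : U) (huv : f u ≠ f v) :
    ∃ i, (min (dist u (c i)) (dist v (c i)) ≤ ρ i ∧ ¬ max (dist u (c i)) (dist v (c i)) ≤ ρ i) ∧
      ∀ j < i, ¬ min (dist u (c j)) (dist v (c j)) ≤ ρ j := by
  rcases lt_or_gt_of_ne huv with h | h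
  · refine ⟨f u, ⟨min_le_of_left_le (hf u).1, fun h' => (hf v).2 _ h ((le_max_right _ _).trans h')⟩,
      fun j hj h' => ?_⟩
    rcases min_le_iff.1 h' with h' | h'
    · exact (hf u).2 j hj h'
    · exact (hf v).2 j (hj.trans h) h'
  · refine ⟨f v, ⟨min_le_of_right_le (hf v).1, fun h' => (hf u).2 _ h ((le_max_left _ _).trans h')⟩,
      fun j hj h' => ?_⟩
    rcases min_le_iff.1 h' with h' | h'
    · exact (hf u).2 j (hj.trans h) h'
    · exact (hf v).2 j hj h'

/-- Given a finite metric space `U`, `k ≥ 1`, and an initial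
`k`-center solution `c : Fin k → U` of radius `R > 0`, for every `δ > 0` and
every `T > 0` there exists an admissible randomized clustering `μ` such that:
(i) every pair `u, v` is separated with probability at most `d(u,v)/δ`; and
(ii) the probability that the clustering radius exceeds `2(R + T)` is at most
`k · e^{−T/δ}`. -/
theorem pairwise_fair_clustering_exists_general
    {U : Type*} [MetricSpace U] [Fintype U] [Nonempty U]
    (k : ℕ) (hk : 1 ≤ k)
    (c : Fin k → U) (R : ℝ) (hR : 0 < R)
    (hcov : ∀ u : U, ∃ i : Fin k, dist u (c i) ≤ R)
    (δ : ℝ) (hδ : 0 < δ) (T : ℝ) (hT : 0 < T) :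
    ∃ μ : @Measure ((U → Fin k) × (Fin k → U)) ⊤,
      @IsProbabilityMeasure _ ⊤ μ ∧
      (∀ᵐ p ∂μ, ∀ i : Fin k, (∃ u : U, p.1 u = i) → p.1 (p.2 i) = i) ∧
      (∀ u v : U,
        μ {p | p.1 u ≠ p.1 v} ≤ ENNReal.ofReal (dist u v / δ)) ∧
      μ {p | ∃ u : U, 2 * (R + T) < dist u (p.2 (p.1 u))}
        ≤ ENNReal.ofReal (k * Real.exp (-(T / δ))) := by
  have hr : 0 < 1 / δ := by positivity
  have := ProbabilityTheory.isProbabilityMeasure_expMeasure hr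
  set ν := ProbabilityTheory.expMeasure (1 / δ) with hν
  set P := Measure.pi fun _ : Fin k => ν with hP
  have hfirst : ∀ S : Fin k → Prop, ∃ i, (∃ i, S i) → S i ∧ ∀ j < i, ¬ S j := by
    intro S
    by_cases hS : ∃ i, S i
    · obtain ⟨i, hi, hmin⟩ := (wellFounded_lt (α := Fin k)).has_min {i | S i} hS
      exact ⟨i, fun _ => ⟨hi, fun j hj hSj => hmin j hSj hj⟩⟩
    · exact ⟨⟨0, hk⟩, fun h => absurd h hS⟩
  choose first hfirst using hfirst
  have hmem : ∀ (f : U → Fin k) (i : Fin k), ∃ w, (∃ u, f u = i) → f w = i := by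
    intro f i
    by_cases h : ∃ u, f u = i
    · exact ⟨h.choose, fun _ => h.choose_spec⟩
    · exact ⟨Classical.arbitrary U, fun h' => absurd h' h⟩
  choose g hg using hmem
  -- The clustering depends on the sample only through the finite table `S` of captures; this is
  -- what makes it measurable for the σ-algebra `⊤`.
  let S : (Fin k → ℝ) → U → Fin k → Prop := fun x u i => dist u (c i) ≤ R + max (x i) 0
  let F : (Fin k → ℝ) → U → Fin k := fun x u => first (S x u)
  let G : (Fin k → ℝ) → (U → Fin k) × (Fin k → U) := fun x => (F x, g (F x))
  have hF : ∀ x u, S x u (F x u) ∧ ∀ j < F x u, ¬ S x u j := by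
    intro x u
    obtain ⟨i, hi⟩ := hcov u
    exact hfirst (S x u) ⟨i, by have := le_max_right (x i) 0; simp only [S]; linarith⟩
  have hS : Measurable S := by
    refine measurable_pi_iff.2 fun u => measurable_pi_iff.2 fun i => ?_
    exact measurableSet_setOfPred.1 (measurableSet_le measurable_const
      (measurable_const.add ((measurable_pi_apply i).max measurable_const)))
  have hG : @Measurable _ _ _ ⊤ G := by
    let K : (U → Fin k → Prop) → (U → Fin k) × (Fin k → U) := fun s =>
      (fun u => first (s u), g fun u => first (s u))
    have hK : @Measurable _ _ _ ⊤ K := @Measurable.of_discrete _ _ _ ⊤ _ K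
    exact @Measurable.comp _ _ _ _ _ ⊤ _ _ hK hS
  let _ : MeasurableSpace ((U → Fin k) × (Fin k → U)) := ⊤
  refine ⟨P.map G, Measure.isProbabilityMeasure_map hG.aemeasurable, ?_, ?_, ?_⟩
  · refine (ae_map_iff hG.aemeasurable trivial).2 (Filter.Eventually.of_forall fun x i hi => ?_)
    exact hg (F x) i hi
  · intro u v
    rw [Measure.map_apply hG trivial]
    let A : Fin k → Set ℝ := fun i =>
      {x | min (dist u (c i)) (dist v (c i)) - R ≤ max x 0}
    let B : Fin k → Set ℝ := fun i =>
      {x | max (dist u (c i)) (dist v (c i)) - R ≤ max x 0}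
    refine le_trans (measure_mono ?_) (first_capture_le ν A B
      (fun i => measurableSet_le measurable_const (measurable_id.max measurable_const))
      (ENNReal.ofReal (dist u v / δ)) fun i => ?_)
    · intro x hx
      obtain ⟨i, hi, hj⟩ := separated_first c (fun i => R + max (x i) 0) (F x) (hF x) u v hx
      refine Set.mem_iUnion.2 ⟨i, (mem_firstBox _ _ _ _).2 ?_⟩
      simpa only [A, B, Set.mem_sdiff, Set.mem_ofPred_eq, sub_le_iff_le_add'] using And.intro hi hj
    · refine exp_gap_le δ hδ _ _ _ (by linarith [min_le_max (a := dist u (c i)) (b := dist v (c i))])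
        ?_
      have h1 := dist_triangle u v (c i)
      have h2 := dist_triangle v u (c i)
      rw [dist_comm v u] at h2
      rcases le_total (dist u (c i)) (dist v (c i)) with h | h
      · rw [max_eq_right h, min_eq_left h]; linarith
      · rw [max_eq_left h, min_eq_right h]; linarith
  · rw [Measure.map_apply hG trivial]
    have hsub : G ⁻¹' {p | ∃ u : U, 2 * (R + T) < dist u (p.2 (p.1 u))} ⊆
        ⋃ i, Function.eval i ⁻¹' Set.Ici T := by
      rintro x ⟨u, hu⟩
      refine Set.mem_iUnion.2 ⟨F x u, ?_⟩
      change 2 * (R + T) < dist u (g (F x) (F x u)) at hu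
      have hw := hg (F x) (F x u) ⟨u, rfl⟩
      have h1 := (hF x u).1
      have h2 := (hF x (g (F x) (F x u))).1
      rw [hw] at h2
      simp only [S] at h1 h2
      have h3 := dist_triangle_right u (g (F x) (F x u)) (c (F x u))
      have h4 : T < max (x (F x u)) 0 := by linarith
      rcases lt_max_iff.1 h4 with h | h
      · exact h.le
      · exact absurd h hT.not_gt
    have heval : ∀ i, P (Function.eval i ⁻¹' Set.Ici T) = ENNReal.ofReal (Real.exp (-(T / δ))) := by
      intro i
      rw [(measurePreserving_eval (fun _ : Fin k => ν) i).measure_preimage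
        measurableSet_Ici.nullMeasurableSet, hν, exp_Ici _ hr T hT.le]
      congr 3
      ring
    calc _ ≤ P (⋃ i, Function.eval i ⁻¹' Set.Ici T) := measure_mono hsub
      _ ≤ ∑ i, P (Function.eval i ⁻¹' Set.Ici T) := measure_iUnion_fintype_le _ _
      _ = ENNReal.ofReal (k * Real.exp (-(T / δ))) := by
        simp only [heval, Finset.sum_const, Finset.card_univ, Fintype.card_fin, nsmul_eq_mul]
        rw [ENNReal.ofReal_mul (by positivity), ENNReal.ofReal_natCast]
end

section
/- Let (U, d) be a finite metric space, k ≥ 1 an integer, and let c_1, …, c_k ∈ U and R > 0 be an initial k-center solution of radius R (every point of U is within distance R of some c_i). For every δ > 0 and every T > 0 there exists an admissible randomized clustering μ such that: (i) for every nonempty subset S ⊆ U with diameter D = max_{u, v ∈ S} d(u, v) and every integer t ≥ 1, the μ-probability that f takes more than t distinct values on S is at most (D / δ)^t; and (ii) the μ-probability that the radius of the clustering exceeds 2 (R + T) is at most k · e^{−T/δ}. -/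
/-!
Attach to each center `c i` an independent exponential variable `x i` of mean `2δ` and assign a
point `u` to the index `i` maximizing `x i - d(u, c i)`, ties going to the larger index; the center
of cluster `i` is always `c i`.

*Admissibility.* If `c i` itself goes to `j ≠ i`, then by the triangle inequality `j` beats `i` at
every point, so cluster `i` is empty.

*Radius.* The winner `i` at `u` satisfies `d(u, c i) ≤ R + x i` as soon as all `x j ≥ 0`, so the
radius exceeds `2 (R + T)` only if some `x i > 2T`, which has probability at most `k e^{-T/δ}`.

*Number of clusters meeting `S`.* Fix `v ∈ S`. Every index used on `S` has score
`x i - d(v, c i)` within `2D` of the maximal score. By `measure_card_near_max_le`, more than `t`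
scores lie within `L` of the maximum with probability at most `(1 - e^{-rL})^t`, `r` being the rate
of the variables; here `rL = D/δ`. For that lemma, split according to the index `j` whose score has
rank `t + 1` and the set `A` of the `t` indices above it: given these, each `a ∈ A` exceeds the
score of `j` by at most `L` with conditional probability at most `1 - e^{-rL}`, by memorylessness.
-/

open MeasureTheory ProbabilityTheory Set

/-- The exponential law is memoryless to the right of `0`, and below `0` it satisfies the same
inequality: overshooting `s` by at most `L` has conditional probability at most `1 - e^{-rL}`.
The set `V` is a half-line starting at `s`, either open or closed. -/
lemma expMeasure_overshoot_le {r : ℝ} (hr : 0 < r) {L : ℝ} (hL : 0 ≤ L) (s : ℝ) (V : Set ℝ)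
    (h1 : Ioi s ⊆ V) (h2 : V ⊆ Ici s) :
    expMeasure r (V ∩ Iic (s + L)) ≤
      ENNReal.ofReal (1 - Real.exp (-(r * L))) * expMeasure r V := by
  have := isProbabilityMeasure_expMeasure hr
  have : NullSingletonClass (expMeasure r) := by unfold expMeasure gammaMeasure; infer_instance
  have hq : 0 ≤ 1 - Real.exp (-(r * L)) := by
    rw [sub_nonneg, Real.exp_le_one_iff]; nlinarith [mul_nonneg hr.le hL]
  have hA : expMeasure r (V ∩ Iic (s + L)) ≤ expMeasure r (Ioc s (s + L)) := by
    rw [Ioc_ae_eq_Icc.measure_eq]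
    exact measure_mono fun z hz => ⟨h2 hz.1, hz.2⟩
  refine hA.trans (le_trans ?_ (mul_le_mul_right (measure_mono h1) _))
  rw [← ofReal_measureReal, ← ofReal_measureReal, ← ENNReal.ofReal_mul hq]
  apply ENNReal.ofReal_le_ofReal
  have e1 : (expMeasure r).real (Ioi s) = 1 - cdf (expMeasure r) s := by
    rw [cdf_eq_real, ← compl_Iic, probReal_compl_eq_one_sub measurableSet_Iic]
  have e2 : (expMeasure r).real (Ioc s (s + L)) =
      cdf (expMeasure r) (s + L) - cdf (expMeasure r) s := by
    rw [cdf_eq_real, cdf_eq_real, ← Iic_sdiff_Iic,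
      measureReal_sdiff (Iic_subset_Iic.2 (by linarith)) measurableSet_Iic]
  rw [e1, e2, cdf_expMeasure_eq hr, cdf_expMeasure_eq hr]
  by_cases hs : 0 ≤ s
  · rw [if_pos hs, if_pos (by linarith), show -(r * (s + L)) = -(r * L) + -(r * s) by ring,
      Real.exp_add]
    apply le_of_eq; ring
  · rw [if_neg hs]
    split_ifs with h
    · have : Real.exp (-(r * L)) ≤ Real.exp (-(r * (s + L))) := by
        apply Real.exp_le_exp.2; nlinarith
      linarith
    · linarith

/-- Inequalities between product measures may be checked on lines parallel to one axis. -/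
lemma pi_measure_le_of_slice {k : ℕ} (μ : Measure ℝ) [IsProbabilityMeasure μ] (a : Fin k)
    {E E' : Set (Fin k → ℝ)} (hE : MeasurableSet E) (hE' : MeasurableSet E') (q : ENNReal)
    (h : ∀ x, μ {z | Function.update x a z ∈ E'} ≤ q * μ {z | Function.update x a z ∈ E}) :
    Measure.pi (fun _ : Fin k => μ) E' ≤ q * Measure.pi (fun _ : Fin k => μ) E := by
  have m (x : Fin k → ℝ) : Measurable (fun z => Function.update x a z) := measurable_update x
  rw [← lintegral_indicator_one hE', ← lintegral_indicator_one hE, ← lintegral_const_mul]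
  · refine lintegral_le_of_lmarginal_le (μ := fun _ : Fin k => μ) {a}
      (measurable_one.indicator hE') ((measurable_one.indicator hE).const_mul q) ?_
    rw [lmarginal_singleton, lmarginal_singleton]
    intro x
    dsimp only
    have hc := lintegral_const_mul (μ := μ) q
      ((measurable_one (α := ENNReal).indicator hE).comp (m x))
    simp only [Function.comp_apply] at hc
    rw [hc]
    convert h x using 1
    · exact lintegral_indicator_one (μ := μ) ((m x) hE')
    · exact congrArg (q * ·) (lintegral_indicator_one (μ := μ) ((m x) hE))
  · exact measurable_one.indicator hE

/-- The score `x i - d i` of the index `i`, paired with `i` itself so that comparing scores in the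
lexicographic order breaks ties in favour of the larger index. -/
def score {k : ℕ} (d x : Fin k → ℝ) (i : Fin k) : ℝ ×ₗ Fin k := toLex (x i - d i, i)

lemma score_lt {k : ℕ} {d x : Fin k → ℝ} {d' x' : Fin k → ℝ} {i j : Fin k} :
    score d x i < score d' x' j ↔
      x i - d i < x' j - d' j ∨ x i - d i = x' j - d' j ∧ i < j := by
  simp [score, Prod.Lex.toLex_lt_toLex]

lemma score_injective {k : ℕ} (d x : Fin k → ℝ) : Function.Injective (score d x) := by
  intro i j h
  exact congrArg (fun p => (ofLex p).2) h

lemma measurableSet_score_lt {k : ℕ} (d : Fin k → ℝ) (i j : Fin k) :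
    MeasurableSet {x | score d x i < score d x j} := by
  simp only [score_lt]
  have hi : Measurable fun x : Fin k → ℝ => x i - d i := by fun_prop
  have hj : Measurable fun x : Fin k → ℝ => x j - d j := by fun_prop
  exact (measurableSet_lt hi hj).union ((measurableSet_eq_fun hi hj).inter (.const _))

/-- The event that `A` is exactly the set of indices scoring above `j`. -/
def aboveEvent {k : ℕ} (d : Fin k → ℝ) (j : Fin k) (A : Finset (Fin k)) : Set (Fin k → ℝ) :=
  {x | ∀ i, score d x j < score d x i ↔ i ∈ A}

lemma measurableSet_aboveEvent {k : ℕ} (d : Fin k → ℝ) (j : Fin k) (A : Finset (Fin k)) :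
    MeasurableSet (aboveEvent d j A) := by
  simp only [aboveEvent, ofPred_forall]
  exact .iInter fun i => (measurableSet_score_lt d j i).iff (.const _)

lemma measurableSet_near {k : ℕ} (d : Fin k → ℝ) (L : ℝ) (j : Fin k) (B : Finset (Fin k)) :
    MeasurableSet {x : Fin k → ℝ | ∀ b ∈ B, x b - d b ≤ x j - d j + L} := by
  simp only [ofPred_forall]
  exact .iInter fun b => .iInter fun _ => measurableSet_le (by fun_prop) (by fun_prop)

/-- Given that `A` is the set of indices above `j`, being within `L` of `j` costs each
of them a factor at most `1 - e^{-rL}`; the factors are collected one coordinate at a time. -/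
lemma measure_above_near_le {k : ℕ} {r : ℝ} (hr : 0 < r) {L : ℝ} (hL : 0 ≤ L) (d : Fin k → ℝ)
    (j : Fin k) (A B : Finset (Fin k)) (hB : B ⊆ A) :
    Measure.pi (fun _ : Fin k => expMeasure r)
        (aboveEvent d j A ∩ {x | ∀ b ∈ B, x b - d b ≤ x j - d j + L}) ≤
      ENNReal.ofReal (1 - Real.exp (-(r * L))) ^ B.card *
        Measure.pi (fun _ : Fin k => expMeasure r) (aboveEvent d j A) := by
  have := isProbabilityMeasure_expMeasure hr
  induction B using Finset.induction_on with
  | empty => simp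
  | insert a B ha ih =>
    rw [Finset.insert_subset_iff] at hB
    by_cases hj : j ∈ A
    -- `j` is not above itself, so the event is empty.
    · have : aboveEvent d j A = ∅ := by
        ext x
        simp only [aboveEvent, mem_ofPred_eq, mem_empty_iff_false, iff_false]
        exact fun h => lt_irrefl _ ((h j).2 hj)
      simp [this]
    have hja : j ≠ a := fun h => hj (h ▸ hB.1)
    rw [Finset.card_insert_of_notMem ha, pow_succ', mul_assoc]
    refine le_trans ?_ (mul_le_mul_right (ih hB.2) _)
    refine pi_measure_le_of_slice _ a
      ((measurableSet_aboveEvent d j A).inter (measurableSet_near d L j B))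
      ((measurableSet_aboveEvent d j A).inter (measurableSet_near d L j (insert a B))) _ ?_
    intro x
    -- `C` collects the constraints that do not involve the coordinate `a`.
    let C : Prop := (∀ i, i ≠ a → (score d x j < score d x i ↔ i ∈ A)) ∧
      ∀ b ∈ B, x b - d b ≤ x j - d j + L
    let V : Set ℝ := {z | x j - d j < z - d a ∨ x j - d j = z - d a ∧ j < a}
    have hE (z : ℝ) : Function.update x a z ∈
        aboveEvent d j A ∩ {x | ∀ b ∈ B, x b - d b ≤ x j - d j + L} ↔ C ∧ z ∈ V := by
      simp only [aboveEvent, mem_inter_iff, mem_ofPred_eq, C, V, score_lt]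
      constructor
      · rintro ⟨h1, h2⟩
        refine ⟨⟨fun i hi => ?_, fun b hb => ?_⟩, ?_⟩
        · simpa [hi, hja] using h1 i
        · have hba : b ≠ a := fun h => ha (h ▸ hb)
          simpa [hba, hja] using h2 b hb
        · simpa [hja, hB.1] using h1 a
      · rintro ⟨⟨h1, h2⟩, h3⟩
        refine ⟨fun i => ?_, fun b hb => ?_⟩
        · by_cases hi : i = a
          · subst hi
            simpa [hja, hB.1] using h3
          · simpa [hi, hja] using h1 i hi
        · have hba : b ≠ a := fun h => ha (h ▸ hb)
          simpa [hba, hja] using h2 b hb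
    have hE' (z : ℝ) : Function.update x a z ∈
        aboveEvent d j A ∩ {x | ∀ b ∈ insert a B, x b - d b ≤ x j - d j + L} ↔
          C ∧ z ∈ V ∩ Iic (x j - d j + d a + L) := by
      have : Function.update x a z ∈
        aboveEvent d j A ∩ {x | ∀ b ∈ insert a B, x b - d b ≤ x j - d j + L} ↔
        Function.update x a z ∈
        aboveEvent d j A ∩ {x | ∀ b ∈ B, x b - d b ≤ x j - d j + L} ∧
          z ≤ x j - d j + d a + L := by
        simp only [mem_inter_iff, mem_ofPred_eq, Finset.forall_mem_insert, Function.update_self,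
          Function.update_of_ne hja]
        have : z - d a ≤ x j - d j + L ↔ z ≤ x j - d j + d a + L := by
          constructor <;> intro h <;> linarith
        tauto
      rw [this, hE, mem_inter_iff, mem_Iic, and_assoc]
    simp only [hE, hE']
    by_cases hC : C
    · simp only [hC, true_and, ofPred_mem_eq]
      refine expMeasure_overshoot_le hr hL _ V (fun z hz => Or.inl ?_) ?_
      · have := mem_Ioi.1 hz
        linarith
      · rintro z (h | ⟨h, -⟩) <;> rw [mem_Ici] <;> linarith
    · simp [hC]

/-- The set of indices scoring above `j`. -/
noncomputable def aboveSet {k : ℕ} (d x : Fin k → ℝ) (j : Fin k) : Finset (Fin k) :=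
  Finset.univ.filter fun i => score d x j < score d x i

lemma mem_aboveEvent {k : ℕ} {d x : Fin k → ℝ} {j : Fin k} {A : Finset (Fin k)} :
    x ∈ aboveEvent d j A ↔ aboveSet d x j = A := by
  simp [aboveEvent, aboveSet, Finset.ext_iff]

lemma card_aboveSet_injective {k : ℕ} (d x : Fin k → ℝ) :
    Function.Injective fun j => (aboveSet d x j).card := by
  have key : ∀ i j, score d x i < score d x j →
      (aboveSet d x j).card < (aboveSet d x i).card := by
    intro i j h
    apply Finset.card_lt_card
    rw [Finset.ssubset_iff_of_subset]
    · exact ⟨j, by simpa [aboveSet] using h, by simp [aboveSet]⟩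
    · intro l hl
      simp only [aboveSet, Finset.mem_filter, Finset.mem_univ, true_and] at hl ⊢
      exact h.trans hl
  intro i j hij
  by_contra hne
  rcases lt_or_gt_of_ne ((score_injective d x).ne hne) with h | h
  · exact (key _ _ h).ne' hij
  · exact (key _ _ h).ne hij

/-- Every rank below `k` is attained by some index. -/
lemma exists_card_aboveSet_eq {k : ℕ} (d x : Fin k → ℝ) {t : ℕ} (ht : t < k) :
    ∃ j, (aboveSet d x j).card = t := by
  have hlt : ∀ j, (aboveSet d x j).card < k := fun j => by
    have : (aboveSet d x j).card < (Finset.univ : Finset (Fin k)).card :=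
      Finset.card_lt_card ((Finset.ssubset_iff_of_subset (Finset.subset_univ _)).2
        ⟨j, Finset.mem_univ _, by simp [aboveSet]⟩)
    simpa using this
  have hinj : Function.Injective fun j => (⟨(aboveSet d x j).card, hlt j⟩ : Fin k) :=
    fun i j h => card_aboveSet_injective d x (congrArg Fin.val h)
  obtain ⟨j, hj⟩ := Finite.surjective_of_injective hinj ⟨t, ht⟩
  exact ⟨j, congrArg Fin.val hj⟩

/-- Among shifted independent exponential variables of rate `r`, more than `t` lie within `L` of
the largest one with probability at most `(1 - e^{-rL})^t`. -/
lemma measure_card_near_max_le {k : ℕ} {r : ℝ} (hr : 0 < r) {L : ℝ} (hL : 0 ≤ L)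
    (d : Fin k → ℝ) (t : ℕ) :
    Measure.pi (fun _ : Fin k => expMeasure r)
        {x | t < {i : Fin k | ∀ l, x l - d l ≤ x i - d i + L}.ncard} ≤
      ENNReal.ofReal (1 - Real.exp (-(r * L))) ^ t := by
  classical
  have := isProbabilityMeasure_expMeasure hr
  let I : Finset (Fin k × Finset (Fin k)) := Finset.univ.filter fun p => p.2.card = t
  have hsub : {x | t < {i : Fin k | ∀ l, x l - d l ≤ x i - d i + L}.ncard} ⊆
      ⋃ p ∈ I, (aboveEvent d p.1 p.2 ∩ {x | ∀ b ∈ p.2, x b - d b ≤ x p.1 - d p.1 + L}) := by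
    intro x hx
    rw [mem_ofPred_eq] at hx
    have htk : t < k := hx.trans_le (by
      simpa [Nat.card_eq_fintype_card] using
        Set.ncard_le_ncard (subset_univ {i : Fin k | ∀ l, x l - d l ≤ x i - d i + L}))
    obtain ⟨j, hj⟩ := exists_card_aboveSet_eq d x htk
    have hjW : ∀ l, x l - d l ≤ x j - d j + L := by
      -- Otherwise all indices near the maximum are above `j`, and there are too many of them.
      by_contra! hcon
      obtain ⟨l, hl⟩ := hcon
      have hW : {i : Fin k | ∀ l, x l - d l ≤ x i - d i + L} ⊆ (aboveSet d x j : Set (Fin k)) := by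
        intro i hi
        have := hi l
        simp only [aboveSet, Finset.coe_filter, Finset.mem_univ, true_and, mem_ofPred_eq, score_lt]
        left; linarith
      have := Set.ncard_le_ncard hW
      rw [Set.ncard_coe_finset] at this
      omega
    simp only [mem_iUnion]
    exact ⟨(j, aboveSet d x j), by simp [I, hj], mem_aboveEvent.2 rfl, fun b _ => hjW b⟩
  calc _ ≤ _ := measure_mono hsub
    _ ≤ _ := measure_biUnion_finset_le _ _
    _ ≤ ∑ p ∈ I, ENNReal.ofReal (1 - Real.exp (-(r * L))) ^ t *
        Measure.pi (fun _ : Fin k => expMeasure r) (aboveEvent d p.1 p.2) := by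
      refine Finset.sum_le_sum fun p hp => ?_
      have hp : p.2.card = t := by simpa [I] using hp
      simpa only [hp] using measure_above_near_le hr hL d p.1 p.2 p.2 subset_rfl
    _ ≤ ENNReal.ofReal (1 - Real.exp (-(r * L))) ^ t * 1 := by
      rw [← Finset.mul_sum]
      gcongr
      rw [← measure_univ (μ := Measure.pi (fun _ : Fin k => expMeasure r))]
      refine sum_measure_le_measure_univ
        (fun p _ => (measurableSet_aboveEvent d p.1 p.2).nullMeasurableSet) ?_
      intro p hp p' hp' hne
      refine Disjoint.aedisjoint (Set.disjoint_left.2 fun x h h' => hne ?_)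
      have hp : p.2.card = t := by simpa [I] using hp
      have hp' : p'.2.card = t := by simpa [I] using hp'
      rw [mem_aboveEvent] at h h'
      have h1 : p.1 = p'.1 := card_aboveSet_injective d x (by
        change (aboveSet d x p.1).card = (aboveSet d x p'.1).card
        rw [h, h', hp, hp'])
      refine Prod.ext h1 ?_
      rw [← h, ← h', h1]
    _ = _ := mul_one _

/-- The law of a finitely valued random variable, as a measure on the discrete σ-algebra. -/
lemma exists_law_top {α β : Type*} [MeasurableSpace α] [Finite β] (P : Measure α)
    [IsProbabilityMeasure P] (F : α → β) (hF : ∀ b, MeasurableSet (F ⁻¹' {b})) :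
    ∃ μ : @Measure β ⊤, @IsProbabilityMeasure _ ⊤ μ ∧ ∀ s, μ s = P (F ⁻¹' s) := by
  let _ : MeasurableSpace β := ⊤
  have hm : Measurable F := measurable_to_countable' hF
  exact ⟨P.map F, Measure.isProbabilityMeasure_map hm.aemeasurable,
    fun s => Measure.map_apply hm trivial⟩

lemma expMeasure_Ioi {r : ℝ} (hr : 0 < r) {s : ℝ} (hs : 0 ≤ s) :
    expMeasure r (Ioi s) = ENNReal.ofReal (Real.exp (-(r * s))) := by
  have := isProbabilityMeasure_expMeasure hr
  rw [← ofReal_measureReal, ← compl_Iic, probReal_compl_eq_one_sub measurableSet_Iic,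
    ← cdf_eq_real, cdf_expMeasure_eq hr, if_pos hs]
  simp

lemma expMeasure_Iio_zero {r : ℝ} (hr : 0 < r) : expMeasure r (Iio 0) = 0 := by
  have := isProbabilityMeasure_expMeasure hr
  refine measure_mono_null (Iio_subset_Iic_self) ?_
  rw [← ofReal_cdf, cdf_expMeasure_eq hr]
  simp

/-- Given a finite metric space `U`, `k ≥ 1`, and an initial
`k`-center solution `c : Fin k → U` of radius `R > 0`, for every `δ > 0` and
every `T > 0` there exists an admissible randomized clustering `μ` such that:
(i) for every nonempty subset `S ⊆ U` with diameter `D` and every integer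
`t ≥ 1`, the probability that `f` takes more than `t` distinct values on `S`
is at most `(D/δ)^t`; and
(ii) the probability that the clustering radius exceeds `2(R + T)` is at most
`k · e^{−T/δ}`. -/
theorem community_preserving_clustering_exists_general
    {U : Type*} [MetricSpace U] [Fintype U] [Nonempty U]
    (k : ℕ) (hk : 1 ≤ k)
    (c : Fin k → U) (R : ℝ) (hR : 0 < R)
    (hcov : ∀ u : U, ∃ i : Fin k, dist u (c i) ≤ R)
    (δ : ℝ) (hδ : 0 < δ) (T : ℝ) (hT : 0 < T) :
    ∃ μ : @Measure ((U → Fin k) × (Fin k → U)) ⊤,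
      @IsProbabilityMeasure _ ⊤ μ ∧
      (∀ᵐ p ∂μ, ∀ i : Fin k, (∃ u : U, p.1 u = i) → p.1 (p.2 i) = i) ∧
      (∀ S : Set U, S.Nonempty → ∀ t : ℕ, 1 ≤ t →
        μ {p | t < (p.1 '' S).ncard}
          ≤ ENNReal.ofReal ((Metric.diam S / δ) ^ t)) ∧
      μ {p | ∃ u : U, 2 * (R + T) < dist u (p.2 (p.1 u))}
        ≤ ENNReal.ofReal (k * Real.exp (-(T / δ))) := by
  classical
  set r : ℝ := 1 / (2 * δ) with hrdef
  have hr : 0 < r := by positivity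
  have := isProbabilityMeasure_expMeasure hr
  let P := Measure.pi (fun _ : Fin k => expMeasure r)
  let dd : U → Fin k → ℝ := fun u i => dist u (c i)
  have : Nonempty (Fin k) := ⟨⟨0, hk⟩⟩
  have hex : ∀ (x : Fin k → ℝ) (u : U), ∃ i, ∀ l, score (dd u) x l ≤ score (dd u) x i :=
    fun x u => Finite.exists_max (score (dd u) x)
  choose f hf using hex
  have hf_iff : ∀ x u i, f x u = i ↔ ∀ l, score (dd u) x l ≤ score (dd u) x i := by
    intro x u i
    refine ⟨fun h => h ▸ hf x u, fun h => ?_⟩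
    exact score_injective _ _ (le_antisymm (h _) (hf x u i))
  have hf_real : ∀ x u l, x l - dist u (c l) ≤ x (f x u) - dist u (c (f x u)) := by
    intro x u l
    have := not_lt.2 (hf x u l)
    rw [score_lt] at this
    push Not at this
    exact this.1
  have hmeas : ∀ b : (U → Fin k) × (Fin k → U),
      MeasurableSet ((fun x => (f x, c)) ⁻¹' {b}) := by
    rintro ⟨g, σ⟩
    have : (fun x => (f x, c)) ⁻¹' {(g, σ)} =
        (⋂ u, ⋂ l, {x | score (dd u) x (g u) < score (dd u) x l}ᶜ) ∩ {_x | c = σ} := by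
      ext x
      simp [funext_iff, hf_iff]
    rw [this]
    exact (MeasurableSet.iInter fun u => .iInter fun l =>
      (measurableSet_score_lt _ _ _).compl).inter (.const _)
  obtain ⟨μ, hμ, hlaw⟩ := exists_law_top P (fun x => (f x, c)) hmeas
  refine ⟨μ, hμ, ?_, ?_, ?_⟩
  · rw [ae_iff, hlaw]
    convert measure_empty (μ := P)
    ext x
    simp only [mem_preimage, mem_ofPred_eq, mem_empty_iff_false, iff_false, not_not]
    rintro i ⟨u, hu⟩
    by_contra hne
    have h1 : score (dd (c i)) x i < score (dd (c i)) x (f x (c i)) :=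
      lt_of_le_of_ne (hf x (c i) i) ((score_injective _ _).ne (Ne.symm hne))
    have h2 := not_lt.2 (hu ▸ hf x u (f x (c i)))
    apply h2
    rw [score_lt] at h1 ⊢
    simp only [dd, dist_self] at h1 ⊢
    have tri := dist_triangle u (c i) (c (f x (c i)))
    rcases h1 with h1 | ⟨h1, h3⟩
    · left; linarith
    · rcases (show x i - dist u (c i) ≤ x (f x (c i)) - dist u (c (f x (c i))) by
        linarith).lt_or_eq with h | h
      · exact Or.inl h
      · exact Or.inr ⟨h, h3⟩
  · rintro S ⟨v, hv⟩ t -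
    rw [hlaw]
    have hD : 0 ≤ Metric.diam S := Metric.diam_nonneg
    refine (measure_mono ?_).trans ((measure_card_near_max_le hr
      (mul_nonneg zero_le_two hD) (dd v) t).trans ?_)
    · intro x hx
      refine lt_of_lt_of_le hx (Set.ncard_le_ncard ?_)
      rintro _ ⟨u, hu, rfl⟩ l
      have huv : dist u v ≤ Metric.diam S :=
        Metric.dist_le_diam_of_mem (Set.toFinite S).isBounded hu hv
      have h1 := hf_real x u l
      have h2 := dist_triangle u v (c l)
      have h3 := dist_triangle v u (c (f x u))
      rw [dist_comm v u] at h3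
      simp only [dd]
      linarith
    · have hq : 1 - Real.exp (-(r * (2 * Metric.diam S))) ≤ Metric.diam S / δ := by
        have h1 := Real.add_one_le_exp (-(r * (2 * Metric.diam S)))
        have h2 : r * (2 * Metric.diam S) = Metric.diam S / δ := by
          rw [hrdef]; field_simp
        linarith
      rw [ENNReal.ofReal_pow (by positivity)]
      gcongr
  · rw [hlaw]
    have hsub : (fun x => (f x, c)) ⁻¹' {p | ∃ u : U, 2 * (R + T) < dist u (p.2 (p.1 u))} ⊆
        ⋃ i : Fin k, Function.eval i ⁻¹' (Ioi (2 * T) ∪ Iio 0) := by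
      rintro x ⟨u, hu⟩
      obtain ⟨j, hj⟩ := hcov u
      have h1 := hf_real x u j
      simp only at hu
      rw [mem_iUnion]
      by_cases h0 : x j < 0
      · exact ⟨j, Or.inr h0⟩
      · refine ⟨f x u, Or.inl ?_⟩
        change 2 * T < x (f x u)
        linarith
    have hone : ∀ i : Fin k, P (Function.eval i ⁻¹' (Ioi (2 * T) ∪ Iio 0)) ≤
        ENNReal.ofReal (Real.exp (-(T / δ))) := by
      intro i
      rw [(measurePreserving_eval (fun _ : Fin k => expMeasure r) i).measure_preimage
        (measurableSet_Ioi.union measurableSet_Iio).nullMeasurableSet]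
      refine (measure_union_le _ _).trans ?_
      rw [expMeasure_Iio_zero hr, add_zero, expMeasure_Ioi hr (by positivity)]
      apply le_of_eq
      congr 3
      rw [hrdef]; field_simp
    calc _ ≤ _ := measure_mono hsub
      _ ≤ _ := measure_iUnion_fintype_le _ _
      _ ≤ ∑ _i : Fin k, ENNReal.ofReal (Real.exp (-(T / δ))) :=
        Finset.sum_le_sum fun i _ => hone i
      _ = _ := by
        rw [Finset.sum_const, Finset.card_univ, Fintype.card_fin, nsmul_eq_mul,
          ENNReal.ofReal_mul (by positivity), ENNReal.ofReal_natCast]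
end

section
/- Let (U, d) be a metric space, let c, u, v ∈ U with d(c, u) ≤ d(c, v), let r ≥ 0, ψ > 0, R > 0 be real numbers, and let ν be the exponential distribution on ℝ with rate λ = 1/(ψ R). Then the conditional probability ν({x : r + x < d(c, v)} ∣ {x : r + x > d(c, u)}) is at most 1 − e^{−d(u, v)/(ψ R)}, and hence at most d(u, v) / (ψ R). -/
/-!
Write `a = d(c,u) - r`, `b = d(c,v) - r`, `D = d(u,v)`, so `b - a ≤ D` by the triangle inequality.
The conditional probability is at most `(F b - F a) / (1 - F a)`, where `F` is the exponential cdf.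
If `a ≥ 0`, memorylessness makes this quotient `1 - e^{-λ(b-a)}`; if `a < 0`, the conditioning is
void and the quotient is `F b ≤ 1 - e^{-λ(b-a)}`, since then `b < b - a`. The linear bound follows
from `1 - e^{-t} ≤ t`.
-/


open MeasureTheory ProbabilityTheory
open scoped ENNReal ProbabilityTheory
/-- The bound on the conditional probability, multiplied out: `P(a < X ≤ b) ≤ (1 - e^{-lD}) P(X > a)`
for `X` exponential of rate `l`. Negative `a` and `b` are allowed. -/
lemma cdf_exp_sub_le {l a b D : ℝ} (hl : 0 < l) (hab : a ≤ b) (hD : b - a ≤ D) :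
    cdf (expMeasure l) b - cdf (expMeasure l) a
      ≤ (1 - Real.exp (-(l * D))) * (1 - cdf (expMeasure l) a) := by
  have hD0 : 0 ≤ D := by linarith
  rw [cdf_expMeasure_eq hl, cdf_expMeasure_eq hl]
  by_cases ha : 0 ≤ a
  · have hexp : Real.exp (-(l * D)) * Real.exp (-(l * a)) ≤ Real.exp (-(l * b)) := by
      rw [← Real.exp_add]
      apply Real.exp_le_exp.mpr
      nlinarith
    rw [if_pos ha, if_pos (ha.trans hab)]
    linarith
  · rw [if_neg ha]
    split_ifs with hb
    · have hexp : Real.exp (-(l * D)) ≤ Real.exp (-(l * b)) := by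
        apply Real.exp_le_exp.mpr
        nlinarith
      linarith
    · have hexp : Real.exp (-(l * D)) ≤ 1 := by
        apply Real.exp_le_one_iff.mpr
        nlinarith
      linarith

/-- In a metric space, for points `c, u, v` with `d(c,u) ≤ d(c,v)`,
a radius `r ≥ 0`, and the exponential distribution `ν` with rate `1/(ψR)`, the
conditional probability `ν({x : r + x < d(c,v)} ∣ {x : r + x > d(c,u)})` is at
most `1 − e^{−d(u,v)/(ψR)}`, and hence at most `d(u,v)/(ψR)`. -/
theorem exp_cond_pair_separation {U : Type*} [MetricSpace U]
    (c u v : U) (hcuv : dist c u ≤ dist c v)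
    (r ψ R : ℝ) (hr : 0 ≤ r) (hψ : 0 < ψ) (hR : 0 < R) :
    (expMeasure (1 / (ψ * R)))[{x : ℝ | r + x < dist c v} | {x : ℝ | dist c u < r + x}]
      ≤ ENNReal.ofReal (1 - Real.exp (-(dist u v / (ψ * R)))) ∧
    (expMeasure (1 / (ψ * R)))[{x : ℝ | r + x < dist c v} | {x : ℝ | dist c u < r + x}]
      ≤ ENNReal.ofReal (dist u v / (ψ * R)) := by
  have hl : 0 < 1 / (ψ * R) := by positivity
  have hq : dist u v / (ψ * R) = 1 / (ψ * R) * dist u v := by ring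
  have hlin : 1 - Real.exp (-(dist u v / (ψ * R))) ≤ dist u v / (ψ * R) := by
    linarith [Real.add_one_le_exp (-(dist u v / (ψ * R)))]
  suffices h : (expMeasure (1 / (ψ * R)))[{x : ℝ | r + x < dist c v} | {x : ℝ | dist c u < r + x}]
      ≤ ENNReal.ofReal (1 - Real.exp (-(dist u v / (ψ * R)))) from
    ⟨h, h.trans (ENNReal.ofReal_le_ofReal hlin)⟩
  have hnonneg : 0 ≤ 1 - Real.exp (-(dist u v / (ψ * R))) := by
    have : Real.exp (-(dist u v / (ψ * R))) ≤ 1 :=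
      Real.exp_le_one_iff.mpr (neg_nonpos.mpr (by positivity))
    linarith
  rw [hq] at hnonneg ⊢
  set l := 1 / (ψ * R)
  have : IsProbabilityMeasure (expMeasure l) := isProbabilityMeasure_expMeasure hl
  have hS : {x : ℝ | dist c u < r + x} = Set.Ioi (dist c u - r) := by
    ext x
    simp [sub_lt_iff_lt_add']
  have hsub : Set.Ioi (dist c u - r) ∩ {x : ℝ | r + x < dist c v}
      ⊆ Set.Ioc (dist c u - r) (dist c v - r) := by
    rintro x ⟨h1, h2⟩
    simp only [Set.mem_ofPred_eq] at h2
    exact ⟨h1, by linarith⟩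
  have hIoi : expMeasure l (Set.Ioi (dist c u - r))
      = ENNReal.ofReal (1 - cdf (expMeasure l) (dist c u - r)) := by
    conv_lhs => rw [← measure_cdf (expMeasure l)]
    exact StieltjesFunction.measure_Ioi _ (tendsto_cdf_atTop _) _
  have hIoc : expMeasure l (Set.Ioc (dist c u - r) (dist c v - r))
      = ENNReal.ofReal (cdf (expMeasure l) (dist c v - r) - cdf (expMeasure l) (dist c u - r)) := by
    conv_lhs => rw [← measure_cdf (expMeasure l)]
    exact StieltjesFunction.measure_Ioc _ _ _
  rw [hS, cond_apply measurableSet_Ioi, mul_comm, ← div_eq_mul_inv]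
  apply ENNReal.div_le_of_le_mul
  refine (measure_mono hsub).trans ?_
  rw [hIoi, hIoc, ← ENNReal.ofReal_mul hnonneg]
  exact ENNReal.ofReal_le_ofReal (cdf_exp_sub_le hl (by linarith)
    (by linarith [dist_triangle c u v]))
end
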